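/- arXiv:1610.07668 — 2 statements merged into one kernel-verified Lean document; each statement's English description precedes it below -/
import Mathlib

section
/- There are infinitely many pairwise non-isomorphic cubic number fields whose ideal class group contains a subgroup isomorphic to (ℤ/2ℤ)^8. Precisely: the set of intermediate fields K of the extension ℚ̄/ℚ (where ℚ̄ is a fixed algebraic closure of ℚ) such that [K : ℚ] = 3 and there exists an injective group homomorphism from (ℤ/2ℤ)^8 into the ideal class group of the ring of integers of K, is an infinite set. -/
/-!
If `θ` is a root of `X³ + AX + B` and the point `(a / b, y / b^{3/2})` lies on `y² = x³ + Ax + B`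
with `y` coprime to `3a² + Ab²`, then the ideal `(a - bθ)` is a square, and its square root gives a
class of order dividing two in the cubic field `ℚ(θ)`. Nine such points whose values `a - bθ` are
independent modulo squares give nine classes; the only relations among them come from units of
positive norm modulo squares. For `A > 0` the field has one real place, hence unit rank one, and
eight of the classes survive.

The nine points come from a rational elliptic surface of Mordell–Weil rank eight, pulled back to a
double cover of the line on which one more point becomes rational. Congruence conditions on the
parameter `(m : M)` make the values independent modulo squares, by prescribing quadratic residue
symbols at nine primes, and make the coordinates coprime. Infinitely many fields arise because
discriminants of cubics defining the same field agree up to a square, while further congruences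
separate the discriminants of the family modulo squares.
-/

open NumberField Polynomial
open scoped nonZeroDivisors

/-! ### Class groups of odd degree fields -/

section SquareIdeals

variable {O : Type*} [CommRing O] [IsDedekindDomain O]

lemma exists_span_singleton_eq_sq_of_isCoprime {α γ y : O} (hcop : IsCoprime α γ)
    (h : α * γ = y ^ 2) : ∃ I : Ideal O, Ideal.span {α} = I ^ 2 :=
  exists_eq_pow_of_mul_eq_pow_of_coprime ((Ideal.isCoprime_span_singleton_iff _ _).2 hcop)
    (by rw [Ideal.span_singleton_mul_span_singleton, h, Ideal.span_singleton_pow])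

-- If `αγ = y²` with `α = a - bθ`, then `3a² + Ab² = γ + (2a + bθ)α`, so that a common divisor of
-- `α` and `γ` divides both `y²` and `3a² + Ab²`.
lemma exists_span_sub_mul_root_eq_sq {θ A B a b y : O} (hθ : θ ^ 3 + A * θ + B = 0)
    (hy : a ^ 3 + A * a * b ^ 2 + B * b ^ 3 = y ^ 2)
    (hcop : IsCoprime y (3 * a ^ 2 + A * b ^ 2)) :
    ∃ I : Ideal O, Ideal.span {a - b * θ} = I ^ 2 := by
  have hfactor : (a - b * θ) * (a ^ 2 + a * (b * θ) + (b * θ) ^ 2 + A * b ^ 2) = y ^ 2 := by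
    linear_combination hy - b ^ 3 * hθ
  refine exists_span_singleton_eq_sq_of_isCoprime ?_ hfactor
  obtain ⟨s, t, hst⟩ := hcop.pow_left (m := 2)
  exact ⟨s * (a ^ 2 + a * (b * θ) + (b * θ) ^ 2 + A * b ^ 2) + t * (2 * a + b * θ), t, by
    linear_combination hst + s * hfactor⟩

end SquareIdeals

section ElementaryTwoGroups

variable {G ι : Type*} [CommGroup G] [Fintype ι]

/-- The homomorphism `v ↦ ∏ i, c i ^ v i` from an elementary abelian `2`-group attached to a
family `c` of elements of order dividing `2`. -/
def twoTorsionHom (c : ι → G) (hc : ∀ i, c i ^ 2 = 1) : Multiplicative (ι → ZMod 2) →* G where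
  toFun v := ∏ i, c i ^ (v.toAdd i).val
  map_one' := by simp
  map_mul' v w := by
    rw [← Finset.prod_mul_distrib]
    refine Finset.prod_congr rfl fun i _ ↦ ?_
    rw [← pow_add, toAdd_mul, Pi.add_apply, ZMod.val_add]
    exact (pow_eq_pow_mod _ (hc i)).symm

lemma exists_injective_of_natCard_ker_le (f : Multiplicative (ι → ZMod 2) →* G) {n r : ℕ}
    (hker : Nat.card f.ker ≤ 2 ^ r) (hn : n + r ≤ Fintype.card ι) :
    ∃ g : Multiplicative (Fin n → ZMod 2) →* G, Function.Injective g := by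
  let W : Submodule (ZMod 2) (ι → ZMod 2) :=
    AddSubgroup.toZModSubmodule 2 (Subgroup.toAddSubgroup' f.ker)
  have hmem (v : ι → ZMod 2) : v ∈ W ↔ f (.ofAdd v) = 1 := Iff.rfl
  have hW : Module.finrank (ZMod 2) W ≤ r := by
    have hcard : Nat.card W = 2 ^ Module.finrank (ZMod 2) W := by
      rw [Module.natCard_eq_pow_finrank (K := ZMod 2), Nat.card_zmod]
    exact (Nat.pow_le_pow_iff_right one_lt_two).1 (hcard ▸ hker)
  obtain ⟨W', hcompl⟩ := W.exists_isCompl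
  have hW' : Module.finrank (ZMod 2) (Fin n → ZMod 2) ≤ Module.finrank (ZMod 2) W' := by
    have hsum := Submodule.finrank_add_eq_of_isCompl hcompl
    rw [Module.finrank_fintype_fun_eq_card] at hsum
    rw [Module.finrank_fin_fun]
    lia
  obtain ⟨j, hj⟩ := finrank_le_iff_exists_linearMap.1 hW'
  refine ⟨f.comp (AddMonoidHom.toMultiplicative (W'.subtype ∘ₗ j).toAddMonoidHom), ?_⟩
  rw [injective_iff_map_eq_one]
  intro v hv
  have hv0 : (j v.toAdd : ι → ZMod 2) = 0 :=
    Submodule.disjoint_def.1 hcompl.disjoint _ ((hmem _).2 hv) (j v.toAdd).2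
  exact (map_eq_zero_iff j hj).1 (Subtype.ext hv0)

end ElementaryTwoGroups

/-- The family `α` is linearly independent in the `𝔽₂`-vector space of elements modulo squares. -/
def IndependentModSquares {ι M : Type*} [Fintype ι] [CommMonoid M] (α : ι → M) : Prop :=
  ∀ e : ι → ℕ, IsSquare (∏ i, α i ^ e i) → ∀ i, Even (e i)

section ClassGroupKernel

variable {O ι : Type*} [CommRing O] [IsDedekindDomain O] [Fintype ι]

lemma classGroup_mk0_sq_eq_one {α : O} {I : (Ideal O)⁰} (hI : Ideal.span {α} = (I : Ideal O) ^ 2) :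
    ClassGroup.mk0 I ^ 2 = 1 := by
  have hprincipal : ((I ^ 2 : (Ideal O)⁰) : Ideal O).IsPrincipal := ⟨α, hI.symm⟩
  rw [← map_pow, ← Subtype.coe_eta (I ^ 2) (I ^ 2).2]
  exact (ClassGroup.mk0_eq_one_iff _).2 hprincipal

lemma exists_prod_pow_eq_unit_mul_sq {α : ι → O} {I : ι → (Ideal O)⁰}
    (hI : ∀ i, Ideal.span {α i} = (I i : Ideal O) ^ 2) {v : Multiplicative (ι → ZMod 2)}
    (hv : twoTorsionHom (fun i ↦ ClassGroup.mk0 (I i))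
      (fun i ↦ classGroup_mk0_sq_eq_one (hI i)) v = 1) :
    ∃ (ε : Oˣ) (β : O), ∏ i, α i ^ (v.toAdd i).val = ε * β ^ 2 := by
  have hmk : ClassGroup.mk0 (∏ i, I i ^ (v.toAdd i).val) = 1 := by
    rw [map_prod, ← hv]
    simp only [map_pow]
    rfl
  obtain ⟨β, hβ⟩ := ((ClassGroup.mk0_eq_one_iff (∏ i, I i ^ (v.toAdd i).val).2).1 hmk).principal
  have hspan : Ideal.span {β ^ 2} = Ideal.span {∏ i, α i ^ (v.toAdd i).val} := by
    rw [← Ideal.span_singleton_pow, ← Ideal.submodule_span_eq, ← hβ, ← Ideal.prod_span_singleton]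
    simp only [Submonoid.coe_finsetProd, SubmonoidClass.coe_pow, ← Finset.prod_pow,
      ← Ideal.span_singleton_pow, hI]
    exact Finset.prod_congr rfl fun i _ ↦ pow_right_comm _ _ _
  obtain ⟨ε, hε⟩ := Ideal.span_singleton_eq_span_singleton.1 hspan
  exact ⟨ε, β, by rw [← hε, mul_comm]⟩

end ClassGroupKernel

section OddDegree

variable {K : Type*} [Field K] [NumberField K]

lemma norm_neg_of_odd_finrank (hodd : Odd (Module.finrank ℚ K)) (x : K) :
    Algebra.norm ℚ (-x) = -Algebra.norm ℚ x := by
  have hneg : Algebra.norm ℚ (-1 : K) = -1 := by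
    rw [show (-1 : K) = algebraMap ℚ K (-1) by simp, Algebra.norm_algebraMap, hodd.neg_one_pow]
  rw [← neg_one_mul, map_mul, hneg, neg_one_mul]

-- The parity vector of a unit consists of its exponents with respect to fundamental units.
lemma exists_parity_forall_isSquare_mul (hodd : Odd (Module.finrank ℚ K)) :
    ∃ parity : (𝓞 K)ˣ → Fin (Units.rank K) → ZMod 2, ∀ ε ε' : (𝓞 K)ˣ,
      0 < Algebra.norm ℚ (ε : K) → 0 < Algebra.norm ℚ (ε' : K) → parity ε = parity ε' →
        IsSquare (ε * ε') := by
  choose ζe hζe using fun ε : (𝓞 K)ˣ ↦ (Units.exist_unique_eq_mul_prod K ε).exists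
  refine ⟨fun ε i ↦ ((ζe ε).2 i : ZMod 2), fun ε ε' hε hε' hparity ↦ ?_⟩
  have heven (i) : Even ((ζe ε).2 i + (ζe ε').2 i) := by
    rw [← ZMod.intCast_eq_zero_iff_even, Int.cast_add]
    have := congrFun hparity i
    simp only at this
    rw [this, CharTwo.add_self_eq_zero]
  choose k hk using heven
  set η : (𝓞 K)ˣ := ∏ i, Units.fundSystem K i ^ k i
  have hmul : ε * ε' = ((ζe ε).1 * (ζe ε').1 : Units.torsion K) * (η * η) := by
    conv_lhs => rw [hζe ε, hζe ε']
    simp only [η, ← Finset.prod_mul_distrib, ← zpow_add, ← hk, Subgroup.coe_mul]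
    simp only [zpow_add, Finset.prod_mul_distrib]
    exact mul_mul_mul_comm _ _ _ _
  obtain hζ | hζ := Units.torsion_eq_one_or_neg_one_of_odd_finrank hodd ((ζe ε).1 * (ζe ε').1)
  · exact ⟨η, by rw [hmul, hζ]; simp⟩
  · have hneg : ((ε * ε' : (𝓞 K)ˣ) : K) = -((η : K) * η) := by rw [hmul, hζ]; simp
    have hnorm : Algebra.norm ℚ (ε : K) * Algebra.norm ℚ (ε' : K) =
        -(Algebra.norm ℚ (η : K)) ^ 2 := by
      rw [← map_mul (Algebra.norm ℚ), sq, ← map_mul (Algebra.norm ℚ),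
        ← norm_neg_of_odd_finrank hodd, ← hneg, Units.val_mul,
        map_mul (algebraMap (𝓞 K) K), map_mul (Algebra.norm ℚ)]
    linarith [mul_pos hε hε', sq_nonneg (Algebra.norm ℚ (η : K))]

variable {ι : Type*} [Fintype ι]

lemma natCard_ker_twoTorsionHom_le (hodd : Odd (Module.finrank ℚ K)) {α : ι → 𝓞 K}
    {I : ι → (Ideal (𝓞 K))⁰} (hI : ∀ i, Ideal.span {α i} = (I i : Ideal (𝓞 K)) ^ 2)
    (hpos : ∀ i, 0 < Algebra.norm ℚ (α i : K)) (hind : IndependentModSquares α) :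
    Nat.card (twoTorsionHom (fun i ↦ ClassGroup.mk0 (I i))
      fun i ↦ classGroup_mk0_sq_eq_one (hI i)).ker ≤ 2 ^ Units.rank K := by
  obtain ⟨parity, hparity⟩ := exists_parity_forall_isSquare_mul hodd
  choose ε β hεβ using fun v : (twoTorsionHom _ fun i ↦ classGroup_mk0_sq_eq_one (hI i)).ker ↦
    exists_prod_pow_eq_unit_mul_sq hI v.2
  have hε (v) : 0 < Algebra.norm ℚ (ε v : K) := by
    have hprod : 0 < Algebra.norm ℚ ((∏ i, α i ^ (v.1.toAdd i).val : 𝓞 K) : K) := by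
      simp only [map_prod, map_pow]
      exact Finset.prod_pos fun i _ ↦ pow_pos (hpos i) _
    simp only [hεβ, map_mul, map_pow] at hprod
    exact pos_of_mul_pos_left hprod (sq_nonneg _)
  have hinj : Function.Injective fun v ↦ parity (ε v) := by
    intro v w hvw
    obtain ⟨η, hη⟩ := hparity _ _ (hε v) (hε w) hvw
    have heven := hind (fun i ↦ (v.1.toAdd i).val +
        (w.1.toAdd i).val) ⟨η * (β v * β w), by
      simp only [pow_add, Finset.prod_mul_distrib, hεβ]
      have hη' : (ε v : 𝓞 K) * ε w = η * η := mod_cast congrArg Units.val hη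
      linear_combination (β v * β w) ^ 2 * hη'⟩
    refine Subtype.ext (Multiplicative.toAdd.injective (funext fun i ↦ ?_))
    have (x y : ZMod 2) : Even (x.val + y.val) → x = y := by decide +revert
    exact this _ _ (heven i)
  calc Nat.card _ ≤ Nat.card (Fin (Units.rank K) → ZMod 2) := Nat.card_le_card_of_injective _ hinj
    _ = 2 ^ Units.rank K := by simp

theorem exists_injective_classGroup_of_independentModSquares (hodd : Odd (Module.finrank ℚ K))
    {α : ι → 𝓞 K} (hsq : ∀ i, ∃ I : Ideal (𝓞 K), Ideal.span {α i} = I ^ 2)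
    (hpos : ∀ i, 0 < Algebra.norm ℚ (α i : K)) (hind : IndependentModSquares α)
    {n : ℕ} (hn : n + Units.rank K ≤ Fintype.card ι) :
    ∃ f : Multiplicative (Fin n → ZMod 2) →* ClassGroup (𝓞 K), Function.Injective f := by
  choose I hI using hsq
  have hI₀ (i) : I i ∈ (Ideal (𝓞 K))⁰ := by
    refine mem_nonZeroDivisors_of_ne_zero fun h ↦ (hpos i).ne' ?_
    have hα : α i = 0 := by simpa [h] using hI i
    simp [hα]
  exact exists_injective_of_natCard_ker_le _
    (natCard_ker_twoTorsionHom_le (I := fun i ↦ ⟨I i, hI₀ i⟩) hodd hI hpos hind) hn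

end OddDegree

/-! ### Independence modulo squares -/

section LocalIndependence

lemma even_of_isSquare_prod_pow {F ι : Type*} [Field F] [Fintype F] [DecidableEq F] [Fintype ι]
    [DecidableEq ι] {x : ι → F} {j : ι} (hx : ∀ i, quadraticChar F (x i) = if i = j then -1 else 1)
    {e : ι → ℕ} (hsq : IsSquare (∏ i, x i ^ e i)) : Even (e j) := by
  obtain ⟨y, hy⟩ := hsq
  have hchar : (-1) ^ e j = quadraticChar F y * quadraticChar F y := by
    simpa only [map_prod, map_pow, map_mul, hx, ite_pow, one_pow, Finset.prod_ite_eq',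
      Finset.mem_univ, if_true] using congrArg (quadraticChar F) hy
  by_contra hodd
  rw [(Nat.not_even_iff_odd.1 hodd).neg_one_pow] at hchar
  linarith [mul_self_nonneg (quadraticChar F y)]

lemma independentModSquares_of_quadraticChar {ι O : Type*} [Fintype ι] [DecidableEq ι] [CommRing O]
    {α : ι → O} (h : ∀ j, ∃ (q : ℕ) (_ : Fact q.Prime) (ψ : O →+* ZMod q),
      ∀ i, quadraticChar (ZMod q) (ψ (α i)) = if i = j then -1 else 1) :
    IndependentModSquares α := by
  intro e hsq j
  obtain ⟨q, _, ψ, hψ⟩ := h j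
  exact even_of_isSquare_prod_pow hψ (by simpa only [map_prod, map_pow] using hsq.map ψ)

lemma IndependentModSquares.ne_zero {ι M : Type*} [Fintype ι] [CommMonoidWithZero M] {α : ι → M}
    (hα : IndependentModSquares α) (i : ι) : α i ≠ 0 := by
  classical
  intro hi
  have hodd : Even ((Pi.single i 1 : ι → ℕ) i) := by
    refine hα (Pi.single i 1) ?_ i
    rw [Finset.prod_eq_zero (Finset.mem_univ i) (by simp [hi])]
    exact .zero
  simp at hodd

variable {q : ℕ} [Fact q.Prime]

lemma exists_padicInt_root_of_simple_root {F : ℤ[X]} (hF : F.Monic) {ρ : ZMod q}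
    (hroot : aeval ρ F = 0) (hsimple : aeval ρ (derivative F) ≠ 0) :
    ∃ z : ℤ_[q], aeval z F = 0 ∧ PadicInt.toZMod z = ρ := by
  obtain ⟨a, rfl⟩ := ZMod.ringHom_surjective (PadicInt.toZMod (p := q)) ρ
  have hmem (x : ℤ_[q]) : x ∈ IsLocalRing.maximalIdeal ℤ_[q] ↔ PadicInt.toZMod x = 0 := by
    rw [← PadicInt.ker_toZMod, RingHom.mem_ker]
  have heval (G : ℤ[X]) : PadicInt.toZMod ((G.map (algebraMap ℤ ℤ_[q])).eval a) =
      aeval (PadicInt.toZMod a) G := by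
    rw [eval_map_algebraMap]
    exact (aeval_algHom_apply (PadicInt.toZMod (p := q)).toIntAlgHom a G).symm
  obtain ⟨z, hz, hza⟩ := HenselianRing.is_henselian (I := IsLocalRing.maximalIdeal ℤ_[q])
    (F.map (algebraMap ℤ ℤ_[q])) (hF.map _) a ((hmem _).2 ((heval F).trans hroot)) (by
      refine IsUnit.map _ ?_
      rw [← IsLocalRing.notMem_maximalIdeal, hmem, derivative_map, heval]
      exact hsimple)
  refine ⟨z, by rwa [IsRoot, eval_map_algebraMap] at hz, ?_⟩
  rwa [hmem, map_sub, sub_eq_zero] at hza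

variable {K : Type*} [Field K]

lemma exists_ringHom_padicInt (φ : K →+* ℚ_[q]) :
    ∃ ψ : 𝓞 K →+* ℤ_[q], ∀ x : 𝓞 K, algebraMap ℤ_[q] ℚ_[q] (ψ x) = φ x := by
  have hint (x : 𝓞 K) : φ x ∈ PadicInt.subring q := by
    have : IsIntegral ℤ_[q] (φ x) :=
      ((RingOfIntegers.isIntegral_coe x).map φ.toIntAlgHom).tower_top
    obtain ⟨y, hy⟩ := IsIntegrallyClosed.isIntegral_iff.1 this
    exact hy ▸ PadicInt.norm_le_one y
  exact ⟨(φ.comp (algebraMap (𝓞 K) K)).codRestrict (PadicInt.subring q) hint, fun _ ↦ rfl⟩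

lemma exists_ringHom_zmod_of_simple_root [NumberField K] {pb : PowerBasis ℚ K} {F : ℤ[X]}
    (hF : F.Monic) (hpb : minpoly ℚ pb.gen = F.map (Int.castRingHom ℚ)) {θ : 𝓞 K}
    (hθ : (θ : K) = pb.gen) {ρ : ZMod q} (hroot : aeval ρ F = 0)
    (hsimple : aeval ρ (derivative F) ≠ 0) :
    ∃ ψ : 𝓞 K →+* ZMod q, ψ θ = ρ := by
  obtain ⟨z, hz, hzρ⟩ := exists_padicInt_root_of_simple_root hF hroot hsimple
  have hz' : aeval (algebraMap ℤ_[q] ℚ_[q] z) (minpoly ℚ pb.gen) = 0 := by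
    rw [hpb, ← algebraMap_int_eq, aeval_map_algebraMap, aeval_algebraMap_apply, hz, map_zero]
  obtain ⟨ψ, hψ⟩ := exists_ringHom_padicInt (pb.lift (algebraMap ℤ_[q] ℚ_[q] z) hz').toRingHom
  have hψθ : ψ θ = z := FaithfulSMul.algebraMap_injective ℤ_[q] ℚ_[q] (by
    rw [hψ, hθ]
    exact pb.lift_gen _ hz')
  exact ⟨PadicInt.toZMod.comp ψ, by rw [RingHom.comp_apply, hψθ, hzρ]⟩

end LocalIndependence

lemma norm_algebraMap_sub_gen {F K : Type*} [Field F] [Field K] [Algebra F K]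
    (pb : PowerBasis F K) (x : F) :
    Algebra.norm F (algebraMap F K x - pb.gen) = (minpoly F pb.gen).eval x := by
  rw [Algebra.norm_eq_matrix_det pb.basis, ← charpoly_leftMulMatrix, Matrix.eval_charpoly, map_sub,
    AlgHom.commutes, Matrix.scalar_apply, Matrix.algebraMap_eq_diagonal]
  rfl

/-! ### Cubic fields -/

section DepressedCubic

variable {R S : Type*} [CommRing R] [CommRing S]

/-- The cubic polynomial `X³ + AX + B`. -/
noncomputable def depressedCubic (A B : R) : R[X] := X ^ 3 + C A * X + C B

/-- The discriminant of `depressedCubic A B`. -/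
def depressedDiscr (A B : R) : R := -(4 * A ^ 3 + 27 * B ^ 2)

lemma monic_depressedCubic (A B : R) : (depressedCubic A B).Monic := by
  rw [depressedCubic]
  monicity!

lemma natDegree_depressedCubic [Nontrivial R] (A B : R) : (depressedCubic A B).natDegree = 3 := by
  rw [depressedCubic]
  compute_degree!

lemma map_depressedCubic (f : R →+* S) (A B : R) :
    (depressedCubic A B).map f = depressedCubic (f A) (f B) := by
  simp [depressedCubic]

lemma eval_depressedCubic (A B x : R) : (depressedCubic A B).eval x = x ^ 3 + A * x + B := by
  simp [depressedCubic]

lemma aeval_depressedCubic (A B : ℤ) (x : R) :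
    aeval x (depressedCubic A B) = x ^ 3 + A * x + B := by
  simp [depressedCubic]

lemma derivative_depressedCubic (A B : R) :
    derivative (depressedCubic A B) = C 3 * X ^ 2 + C A := by
  simp only [depressedCubic, derivative_add, derivative_X_pow, derivative_C_mul, derivative_X,
    derivative_C, Nat.cast_ofNat, Nat.reduceSub, mul_one, add_zero]

lemma irreducible_map_of_forall_aeval_zmod_ne_zero {F : ℤ[X]} (hF : F.Monic)
    (h2 : 2 ≤ F.natDegree) (h3 : F.natDegree ≤ 3) (p : ℕ) [Fact p.Prime]
    (h : ∀ x : ZMod p, aeval x F ≠ 0) : Irreducible (F.map (Int.castRingHom ℚ)) := by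
  have hmod : Irreducible (F.map (Int.castRingHom (ZMod p))) := by
    have hdeg := hF.natDegree_map (Int.castRingHom (ZMod p))
    rw [(hF.map _).irreducible_iff_roots_eq_zero_of_degree_le_three (by lia) (by lia),
      Multiset.eq_zero_iff_forall_notMem]
    intro x hx
    refine h x ?_
    rw [← eval_map_algebraMap]
    exact isRoot_of_mem_roots hx
  exact (hF.irreducible_iff_irreducible_map_fraction_map (K := ℚ)).1
    (hF.irreducible_of_irreducible_map _ _ hmod)

end DepressedCubic

namespace depressedCubic

variable {K : Type*} [Field K] [NumberField K] {A B : ℤ} {pb : PowerBasis ℚ K}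
  (hpb : minpoly ℚ pb.gen = depressedCubic (A : ℚ) B)

include hpb

lemma finrank_eq_three : Module.finrank ℚ K = 3 := by
  rw [pb.finrank, ← pb.natDegree_minpoly, hpb, natDegree_depressedCubic]

lemma gen_pow_three_add : pb.gen ^ 3 + A * pb.gen + B = 0 := by
  simpa [hpb, depressedCubic] using minpoly.aeval ℚ pb.gen

lemma exists_ringOfIntegers_eq_gen :
    ∃ θ : 𝓞 K, (θ : K) = pb.gen ∧ θ ^ 3 + A * θ + B = 0 := by
  have hint : IsIntegral ℤ pb.gen :=
    ⟨depressedCubic A B, monic_depressedCubic A B, by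
      rw [← aeval_def, aeval_depressedCubic, gen_pow_three_add hpb]⟩
  obtain ⟨θ, hθ⟩ : ∃ θ : 𝓞 K, (θ : K) = pb.gen := ⟨⟨pb.gen, hint⟩, rfl⟩
  refine ⟨θ, hθ, RingOfIntegers.coe_injective ?_⟩
  simpa [hθ] using gen_pow_three_add hpb

-- The cubic is strictly increasing on `ℝ`.
lemma nrRealPlaces_le_one (hA : 0 < A) : InfinitePlace.nrRealPlaces K ≤ 1 := by
  classical
  rw [← InfinitePlace.card_real_embeddings, Fintype.card_le_one_iff_subsingleton]
  refine ⟨fun ⟨φ, hφ⟩ ⟨ψ, hψ⟩ ↦ Subtype.ext ?_⟩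
  have hroot (σ : K →+* ℝ) : σ pb.gen ^ 3 + A * σ pb.gen + B = 0 := by
    simpa using congrArg σ (gen_pow_three_add hpb)
  have hgen : hφ.embedding pb.gen = hψ.embedding pb.gen := by
    have hx := hroot hφ.embedding
    have hy := hroot hψ.embedding
    set x := hφ.embedding pb.gen
    set y := hψ.embedding pb.gen
    have hfactor : (x - y) * (x ^ 2 + x * y + y ^ 2 + A) = 0 := by linear_combination hx - hy
    have hpos : 0 < x ^ 2 + x * y + y ^ 2 + A := by
      have : (0 : ℝ) < A := mod_cast hA
      nlinarith [sq_nonneg (x + y), sq_nonneg x, sq_nonneg y]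
    exact sub_eq_zero.1 ((mul_eq_zero.1 hfactor).resolve_right hpos.ne')
  have hφψ : φ.toRatAlgHom = ψ.toRatAlgHom := pb.algHom_ext (by
    rw [RingHom.toRatAlgHom_apply, RingHom.toRatAlgHom_apply, ← hφ.coe_embedding_apply, hgen,
      hψ.coe_embedding_apply])
  exact RingHom.ext fun x ↦ DFunLike.congr_fun hφψ x

lemma unitsRank_le_one (hA : 0 < A) : Units.rank K ≤ 1 := by
  have hplaces := InfinitePlace.card_add_two_mul_card_eq_rank K
  rw [finrank_eq_three hpb] at hplaces
  have := nrRealPlaces_le_one hpb hA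
  rw [Units.rank, InfinitePlace.card_eq_nrRealPlaces_add_nrComplexPlaces]
  lia

lemma norm_sub_mul_gen (a b : ℚ) :
    Algebra.norm ℚ (algebraMap ℚ K a - algebraMap ℚ K b * pb.gen) =
      a ^ 3 + A * a * b ^ 2 + B * b ^ 3 := by
  obtain rfl | hb := eq_or_ne b 0
  · rw [map_zero, zero_mul, sub_zero, Algebra.norm_algebraMap, finrank_eq_three hpb]
    ring
  · have hfactor : algebraMap ℚ K a - algebraMap ℚ K b * pb.gen =
        algebraMap ℚ K b * (algebraMap ℚ K (a / b) - pb.gen) := by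
      rw [mul_sub, ← map_mul, mul_div_cancel₀ _ hb]
    rw [hfactor, map_mul, Algebra.norm_algebraMap, finrank_eq_three hpb, norm_algebraMap_sub_gen,
      hpb, eval_depressedCubic]
    field_simp

-- Multiply `F'(θ) = 3θ² + A` by `θ`: `θ F'(θ) = -3B - 2Aθ` is linear in `θ`.
lemma norm_derivative_gen :
    Algebra.norm ℚ (aeval pb.gen (derivative (minpoly ℚ pb.gen))) = -depressedDiscr (A : ℚ) B := by
  have hB : (B : ℚ) ≠ 0 := by
    intro hB
    have hgen : pb.gen = 0 := by
      rw [← minpoly.coeff_zero_eq_zero (Algebra.IsIntegral.isIntegral (R := ℚ) pb.gen), hpb]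
      simp [depressedCubic, hB]
    have hdeg := congrArg natDegree hpb
    rw [hgen, minpoly.zero, natDegree_X, natDegree_depressedCubic] at hdeg
    lia
  have hderiv : aeval pb.gen (derivative (minpoly ℚ pb.gen)) = 3 * pb.gen ^ 2 + A := by
    simp [hpb, derivative_depressedCubic]
  have hgen := norm_sub_mul_gen hpb 0 1
  have hmul := norm_sub_mul_gen hpb (-3 * B) (2 * A)
  have hlinear : algebraMap ℚ K (-3 * B) - algebraMap ℚ K (2 * A) * pb.gen =
      -(algebraMap ℚ K 0 - algebraMap ℚ K 1 * pb.gen) * (3 * pb.gen ^ 2 + A) := by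
    simp only [map_mul, map_neg, map_ofNat, map_intCast, map_zero, map_one]
    linear_combination -3 * gen_pow_three_add hpb
  have hodd : Odd (Module.finrank ℚ K) := by rw [finrank_eq_three hpb]; decide
  rw [hlinear, map_mul, norm_neg_of_odd_finrank hodd, hgen] at hmul
  rw [hderiv, depressedDiscr]
  refine mul_left_cancel₀ hB ?_
  linear_combination -hmul

lemma discr_powerBasis : Algebra.discr ℚ pb.basis = depressedDiscr (A : ℚ) B := by
  rw [Algebra.discr_powerBasis_eq_norm, norm_derivative_gen hpb, finrank_eq_three hpb]
  norm_num

end depressedCubic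

lemma exists_discr_eq_sq_mul_discr {F K ι : Type*} [Field F] [Field K] [Algebra F K] [Fintype ι]
    [DecidableEq ι] (b b' : Module.Basis ι F K) :
    ∃ s : F, Algebra.discr F b' = s ^ 2 * Algebra.discr F b := by
  refine ⟨(b.toMatrix b').det, ?_⟩
  rw [← b.toMatrix_map_vecMul b', Algebra.discr_of_matrix_vecMul, b.toMatrix_map_vecMul]

lemma isSquare_depressedDiscr_mul {K : Type*} [Field K] [NumberField K] {A B A' B' : ℤ}
    {pb pb' : PowerBasis ℚ K} (hpb : minpoly ℚ pb.gen = depressedCubic (A : ℚ) B)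
    (hpb' : minpoly ℚ pb'.gen = depressedCubic (A' : ℚ) B') :
    IsSquare (depressedDiscr A B * depressedDiscr A' B') := by
  obtain ⟨s, hs⟩ := exists_discr_eq_sq_mul_discr pb.basis
    (pb'.basis.reindex (finCongr (pb'.finrank.symm.trans pb.finrank)))
  rw [Module.Basis.coe_reindex, Algebra.discr_reindex, depressedCubic.discr_powerBasis hpb,
    depressedCubic.discr_powerBasis hpb'] at hs
  rw [← Rat.isSquare_intCast_iff]
  refine ⟨s * depressedDiscr (A : ℚ) B, ?_⟩
  simp only [depressedDiscr] at hs ⊢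
  push_cast
  linear_combination (-(4 * (A : ℚ) ^ 3 + 27 * B ^ 2)) * hs

/-- A simple root `ρ` of `X³ + AX + B` in `𝔽_q` at which `a i - b i * ρ` is a nonzero square for
every `i ≠ j` and a nonsquare for `i = j`. -/
structure IsSeparatingRoot {q : ℕ} [Fact q.Prime] {ι : Type*} [DecidableEq ι] (A B : ZMod q)
    (a b : ι → ZMod q) (j : ι) (ρ : ZMod q) : Prop where
  root : ρ ^ 3 + A * ρ + B = 0
  simple : 3 * ρ ^ 2 + A ≠ 0
  quadraticChar_eq (i : ι) : quadraticChar (ZMod q) (a i - b i * ρ) = if i = j then -1 else 1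

theorem exists_injective_classGroup_of_separatingRoots {K : Type*} [Field K] [NumberField K]
    {A B : ℤ} {pb : PowerBasis ℚ K} (hpb : minpoly ℚ pb.gen = depressedCubic (A : ℚ) B) (hA : 0 < A)
    {ι : Type*} [Fintype ι] [DecidableEq ι] {a b y : ι → ℤ}
    (heq : ∀ i, a i ^ 3 + A * a i * b i ^ 2 + B * b i ^ 3 = y i ^ 2)
    (hcop : ∀ i, IsCoprime (y i) (3 * a i ^ 2 + A * b i ^ 2))
    (hsep : ∀ j, ∃ (q : ℕ) (_ : Fact q.Prime) (ρ : ZMod q),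
      IsSeparatingRoot (A : ZMod q) B (fun i ↦ a i) (fun i ↦ b i) j ρ)
    {n : ℕ} (hn : n + 1 ≤ Fintype.card ι) :
    ∃ f : Multiplicative (Fin n → ZMod 2) →* ClassGroup (𝓞 K), Function.Injective f := by
  obtain ⟨θ, hθ, hroot⟩ := depressedCubic.exists_ringOfIntegers_eq_gen hpb
  have hind : IndependentModSquares fun i ↦ (a i : 𝓞 K) - b i * θ := by
    refine independentModSquares_of_quadraticChar fun j ↦ ?_
    obtain ⟨q, hq, ρ, hρ⟩ := hsep j
    obtain ⟨ψ, hψ⟩ := exists_ringHom_zmod_of_simple_root (ρ := ρ) (monic_depressedCubic A B)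
      (by rw [hpb, map_depressedCubic, eq_intCast, eq_intCast]) hθ
      (by rw [aeval_depressedCubic, hρ.root])
      (by simpa [derivative_depressedCubic, map_ofNat] using hρ.simple)
    refine ⟨q, hq, ψ, fun i ↦ ?_⟩
    simpa only [map_sub, map_mul, map_intCast, hψ] using hρ.quadraticChar_eq i
  have hnorm (i : ι) : 0 < Algebra.norm ℚ (((a i : 𝓞 K) - b i * θ : 𝓞 K) : K) := by
    refine lt_of_le_of_ne ?_ (Algebra.norm_ne_zero_iff.2
      (RingOfIntegers.coe_ne_zero_iff.2 (hind.ne_zero i))).symm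
    have hval := depressedCubic.norm_sub_mul_gen hpb (a i) (b i)
    simp only [map_intCast] at hval
    simp only [map_sub, map_mul, map_intCast, hθ, hval]
    exact_mod_cast (heq i).symm ▸ sq_nonneg (y i)
  have hsq (i : ι) : ∃ I : Ideal (𝓞 K), Ideal.span {(a i : 𝓞 K) - b i * θ} = I ^ 2 :=
    exists_span_sub_mul_root_eq_sq (y := y i) hroot
      (mod_cast congrArg (Int.cast (R := 𝓞 K)) (heq i))
      (by simpa using (hcop i).map (Int.castRingHom (𝓞 K)))
  have hodd : Odd (Module.finrank ℚ K) := by rw [depressedCubic.finrank_eq_three hpb]; decide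
  exact exists_injective_classGroup_of_independentModSquares hodd hsq hnorm hind
    ((Nat.add_le_add_left (depressedCubic.unitsRank_le_one hpb hA) n).trans hn)

lemma exists_intermediateField_powerBasis (L : Type*) {k : Type*} [Field k] [Field L] [Algebra k L]
    [IsAlgClosed L] {F : k[X]} (hirr : Irreducible F) (hF : F.Monic) :
    ∃ (K : IntermediateField k L) (pb : PowerBasis k K), minpoly k pb.gen = F := by
  obtain ⟨t, ht⟩ := IsAlgClosed.exists_aeval_eq_zero L F (degree_pos_of_irreducible hirr).ne'
  have hint : IsIntegral k t := ⟨F, hF, ht⟩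
  refine ⟨IntermediateField.adjoin k {t}, IntermediateField.adjoin.powerBasis hint, ?_⟩
  rw [IntermediateField.adjoin.powerBasis_gen, IntermediateField.minpoly_gen,
    minpoly.eq_of_irreducible_of_monic hirr ht hF]

/-! ### The family of elliptic curves -/

section CommonRoots

lemma exists_mul_add_mul_eq_C_of_isCoprime_map {R k : Type*} [CommRing R] [Field k] (φ : R →+* k)
    {f g : R[X]} (hf : f.natDegree ≠ 0) (hmap : (f.map φ).natDegree = f.natDegree)
    (hcop : IsCoprime (f.map φ) (g.map φ)) :
    ∃ p q : R[X], ∃ r : R, r ≠ 0 ∧ f * p + g * q = C r := by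
  obtain ⟨p, q, -, -, hpq⟩ := exists_mul_add_mul_eq_C_resultant f g le_rfl le_rfl (.inl hf)
  refine ⟨p, q, _, fun hzero ↦ ?_, hpq⟩
  obtain ⟨d, hd⟩ := Nat.exists_eq_add_of_le (natDegree_map_le (f := φ) (p := g))
  have hlead : (f.map φ).coeff f.natDegree ≠ 0 := by
    rw [← hmap, coeff_natDegree, leadingCoeff_ne_zero]
    intro h
    exact hf (by rw [← hmap, h, natDegree_zero])
  have hres := resultant_map_map f g f.natDegree g.natDegree φ
  rw [hzero, map_zero, hd, resultant_add_right_deg _ _ _ _ _ le_rfl, ← hmap] at hres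
  exact mul_ne_zero (pow_ne_zero d (hmap ▸ hlead)) (resultant_ne_zero _ _ hcop) hres

lemma isRoot_derivative_of_sq_dvd_mul {R : Type*} [CommRing R] [IsDomain R] {f g : R[X]} {h : R}
    (hdvd : (X - C h) ^ 2 ∣ f * g) (hf : f.eval h ≠ 0) :
    g.IsRoot h ∧ (derivative g).IsRoot h := by
  obtain ⟨s, hs⟩ := hdvd
  have hg : g.eval h = 0 := by
    have := congrArg (eval h) hs
    simp only [eval_mul, eval_pow, eval_sub, eval_X, eval_C, sub_self] at this
    simpa [hf] using this
  refine ⟨hg, ?_⟩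
  have := congrArg (fun F ↦ eval h (derivative F)) hs
  simpa [derivative_mul, derivative_pow, hg, hf] using this

lemma pow_six_mul_depressedDiscr {R : Type*} [CommRing R] {A B a b y : R}
    (h : a ^ 3 + A * a * b ^ 2 + B * b ^ 3 = y ^ 2) :
    b ^ 6 * depressedDiscr A B =
      (3 * a ^ 2 + A * b ^ 2) ^ 2 * (9 * a ^ 2 - 4 * (3 * a ^ 2 + A * b ^ 2)) +
      y ^ 2 * (54 * a * (3 * a ^ 2 + A * b ^ 2) - 108 * a ^ 3 - 27 * y ^ 2) := by
  rw [depressedDiscr, ← h]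
  ring

end CommonRoots

section Family

variable {R S : Type*} [CommRing R] [CommRing S]

/-- The first coordinate of the double cover `(m : M) ↦ (u : v)` of the projective line, over which
the ninth point `pointNum m M 8` of the family becomes rational. -/
def conicU (m M : R) : R := m ^ 2 - 4701776625 * M ^ 2

/-- The second coordinate of the double cover `(m : M) ↦ (u : v)`. -/
def conicV (m M : R) : R := 2 * m * M

/-- The cubic form in the coefficient `v * formA u v` of the rational elliptic surface
`y² = x³ + v * formA u v * x + v * formB u v`, which has Mordell–Weil rank eight over `ℚ(u / v)`. -/
def formA (u v : R) : R :=
  25110 * u ^ 3 - 3694798395 * u ^ 2 * v - 70335440911080 * u * v ^ 2 -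
    1285679337570081072 * v ^ 3

/-- The quintic form in the constant coefficient of the rational elliptic surface of `formA`. -/
def formB (u v : R) : R :=
  -729 * u ^ 5 + 1134695790 * u ^ 4 * v - 34951010082030 * u ^ 3 * v ^ 2 +
    1348265275280906760 * u ^ 2 * v ^ 3 + 73243681208969615065440 * u * v ^ 4 +
    1037558448384129728237038464 * v ^ 5

/-- The coefficient of `x` in the family `y² = x³ + A x + B` pulled back to `(m : M)`. -/
def curveA (m M : R) : R := conicV m M * formA (conicU m M) (conicV m M)

/-- The constant coefficient in the family `y² = x³ + A x + B` pulled back to `(m : M)`. -/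
def curveB (m M : R) : R := conicV m M * formB (conicU m M) (conicV m M)

/-- The binary quadratic form `u² + α u v + β v²`. -/
def quadraticForm (α β u v : R) : R := u ^ 2 + α * u * v + β * v ^ 2

/-- The binary cubic form `u³ + γ u² v + δ u v² + ε v³`. -/
def cubicForm (γ δ ε u v : R) : R := u ^ 3 + γ * u ^ 2 * v + δ * u * v ^ 2 + ε * v ^ 3

/-- Numerators of the `x`-coordinates `pointNum m M i / pointDen i` of nine points on
`y² = x³ + A x + B`. The first eight are sections of the rational elliptic surface; the last one
exists only over the double cover. -/
def pointNum (m M : R) : Fin 9 → R :=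
  let u := conicU m M
  let v := conicV m M
  ![quadraticForm (-718920) (-11033955312) u v,
    quadraticForm (-204999) 4815504252 u v,
    quadraticForm 100896 (-3584503248) u v,
    quadraticForm (-13455) (-1353621732) u v,
    quadraticForm 78225 855770268 u v,
    quadraticForm 277776 2705497392 u v,
    quadraticForm (-72519) 25060544892 u v,
    quadraticForm (-1323639) (-24445652676) u v,
    m ^ 4 - 2814990 * m ^ 3 * M - 17263050450 * m ^ 2 * M ^ 2 +
      76589825421768750 * m * M ^ 3 + 4974008272064187890625 * M ^ 4]

/-- Numerators of the `y`-coordinates of the points with `x`-coordinate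
`pointNum m M i / pointDen i`; the denominators are the square roots of `pointDen i ^ 3`. -/
def pointSqrt (m M : R) : Fin 9 → R :=
  let u := conicU m M
  let v := conicV m M
  ![cubicForm 642708 92437619760 2556975635121600 u v,
    cubicForm 443736 27291844944 605442390600960 u v,
    cubicForm 328896 (-17173173456) (-306731173351680) u v,
    cubicForm (-7992) (-3239791920) (-17252592537600) u v,
    cubicForm 129528 1775693520 23749304198400 u v,
    cubicForm 594216 5802699024 174793535642880 u v,
    cubicForm 642456 29313190224 (-3726307974977280) u v,
    cubicForm 166104 (-98676862128) (-4609410901095168) u v,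
    m ^ 6 + 80640 * m ^ 5 * M - 1479896799075 * m ^ 4 * M ^ 2 -
      356975977236480000 * m ^ 3 * M ^ 3 + 28141400163012842671875 * m ^ 2 * M ^ 4 +
      8079381116479301674500000000 * m * M ^ 5 + 350800137392220586856230224609375 * M ^ 6]

/-- Denominators of the `x`-coordinates of the nine points, all of them perfect squares. -/
def pointDen : Fin 9 → ℤ := ![16, 9, 4, 1, 1, 4, 9, 25, 25]

lemma pointNum_pointDen_equation (m M : R) (i : Fin 9) :
    pointNum m M i ^ 3 + curveA m M * pointNum m M i * pointDen i ^ 2 + curveB m M * pointDen i ^ 3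
      = pointSqrt m M i ^ 2 := by
  fin_cases i <;>
    simp [pointNum, pointSqrt, pointDen, quadraticForm, cubicForm, curveA, curveB,
      formA, formB, conicU, conicV] <;> ring

lemma map_curveA (φ : R →+* S) (m M : R) : φ (curveA m M) = curveA (φ m) (φ M) := by
  simp [map_ofNat, curveA, formA, conicU, conicV]

lemma map_curveB (φ : R →+* S) (m M : R) : φ (curveB m M) = curveB (φ m) (φ M) := by
  simp [map_ofNat, curveB, formB, conicU, conicV]

lemma map_pointNum (φ : R →+* S) (m M : R) (i : Fin 9) :
    φ (pointNum m M i) = pointNum (φ m) (φ M) i := by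
  fin_cases i <;> simp [map_ofNat, pointNum, quadraticForm, conicU, conicV]

lemma map_pointSqrt (φ : R →+* S) (m M : R) (i : Fin 9) :
    φ (pointSqrt m M i) = pointSqrt (φ m) (φ M) i := by
  fin_cases i <;> simp [map_ofNat, pointSqrt, cubicForm, conicU, conicV]

lemma curveA_mul (r m M : R) : curveA (r * m) (r * M) = r ^ 8 * curveA m M := by
  simp only [curveA, formA, conicU, conicV]
  ring

lemma curveB_mul (r m M : R) : curveB (r * m) (r * M) = r ^ 12 * curveB m M := by
  simp only [curveB, formB, conicU, conicV]
  ring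

lemma pointNum_mul (r m M : R) (i : Fin 9) :
    pointNum (r * m) (r * M) i = r ^ 4 * pointNum m M i := by
  fin_cases i <;> simp [pointNum, quadraticForm, conicU, conicV] <;> ring

lemma pointSqrt_mul (r m M : R) (i : Fin 9) :
    pointSqrt (r * m) (r * M) i = r ^ 6 * pointSqrt m M i := by
  fin_cases i <;> simp [pointSqrt, cubicForm, conicU, conicV] <;> ring

/-- The discriminant of the family up to sign, divided by `conicV m M ^ 2`. -/
def discrFactor (m M : R) : R :=
  4 * conicV m M * formA (conicU m M) (conicV m M) ^ 3 +
    27 * formB (conicU m M) (conicV m M) ^ 2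

lemma discrFactor_X_one_zmod_37 :
    discrFactor (X : (ZMod 37)[X]) 1 =
      11 * X ^ 20 + 4 * X ^ 19 + 24 * X ^ 18 + 33 * X ^ 17 + 31 * X ^ 16 + 27 * X ^ 15 +
      22 * X ^ 14 + 21 * X ^ 13 + 6 * X ^ 12 + 10 * X ^ 11 + 35 * X ^ 10 + 30 * X ^ 9 +
      17 * X ^ 8 + 12 * X ^ 7 + 6 * X ^ 6 + 12 * X ^ 5 + 29 * X ^ 4 + 21 * X ^ 3 + 29 * X ^ 2 +
      33 * X + 4 := by
  simp only [discrFactor, formA, formB, conicU, conicV]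
  reduce_mod_char
  ring_nf
  reduce_mod_char

set_option maxRecDepth 4000 in
lemma separable_discrFactor_zmod_37 : (discrFactor (X : (ZMod 37)[X]) 1).Separable := by
  have char_eq_zero : (37 : (ZMod 37)[X]) = 0 := CharP.cast_eq_zero _ 37
  -- The Bézout cofactors come from the extended Euclidean algorithm modulo 37.
  refine ⟨34 * X ^ 17 + 11 * X ^ 16 + 16 * X ^ 15 + 35 * X ^ 14 + 13 * X ^ 13 + 17 * X ^ 12 +
    23 * X ^ 11 + 22 * X ^ 10 + 13 * X ^ 9 + 24 * X ^ 8 + 9 * X ^ 7 + 4 * X ^ 6 + 4 * X ^ 5 +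
    31 * X ^ 4 + 34 * X ^ 3 + 13 * X ^ 2 + 33 * X,
    2 * X ^ 18 + X ^ 17 + 26 * X ^ 16 + 16 * X ^ 14 + 34 * X ^ 13 + 14 * X ^ 12 + 9 * X ^ 11 +
    31 * X ^ 10 + 11 * X ^ 9 + 34 * X ^ 8 + 30 * X ^ 7 + 18 * X ^ 6 + 16 * X ^ 5 + 6 * X ^ 4 +
    13 * X ^ 3 + 32 * X ^ 2 + 34 * X + 9, ?_⟩
  rw [discrFactor_X_one_zmod_37]
  simp only [derivative_add, derivative_mul, derivative_X_pow, derivative_ofNat, derivative_X,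
    map_ofNat, Nat.cast_ofNat, Nat.reduceSub]
  linear_combination (22 * X ^ 37 + 17 * X ^ 36 + 208 * X ^ 35 + 145 * X ^ 34 + 497 * X ^ 33 +
    742 * X ^ 32 + 806 * X ^ 31 + 1128 * X ^ 30 + 1418 * X ^ 29 + 1385 * X ^ 28 +
    1619 * X ^ 27 + 1753 * X ^ 26 +
    2036 * X ^ 25 + 2119 * X ^ 24 + 2144 * X ^ 23 + 2338 * X ^ 22 + 2203 * X ^ 21 +
    2110 * X ^ 20 + 2211 * X ^ 19 + 2290 * X ^ 18 + 2364 * X ^ 17 + 2169 * X ^ 16 +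
    1765 * X ^ 15 + 1446 * X ^ 14 + 1086 * X ^ 13 + 826 * X ^ 12 + 945 * X ^ 11 + 976 * X ^ 10 +
    753 * X ^ 9 + 508 * X ^ 8 + 325 * X ^ 7 + 266 * X ^ 6 + 298 * X ^ 5 + 264 * X ^ 4 +
    189 * X ^ 3 + 128 * X ^ 2 + 48 * X + 8) * char_eq_zero

/-- The derivative `3x² + A` at the `i`-th point of the family, with its denominator cleared. -/
def pointDeriv (m M : R) (i : Fin 9) : R :=
  3 * pointNum m M i ^ 2 + curveA m M * (pointDen i : R) ^ 2

lemma map_pointDeriv (φ : R →+* S) (m M : R) (i : Fin 9) :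
    φ (pointDeriv m M i) = pointDeriv (φ m) (φ M) i := by
  simp only [pointDeriv, map_add, map_mul, map_pow, map_ofNat, map_pointNum, map_curveA,
    map_intCast]

lemma pointDeriv_mul (r m M : R) (i : Fin 9) :
    pointDeriv (r * m) (r * M) i = r ^ 8 * pointDeriv m M i := by
  simp only [pointDeriv, pointNum_mul, curveA_mul]
  ring

lemma map_discrFactor (φ : R →+* S) (m M : R) :
    φ (discrFactor m M) = discrFactor (φ m) (φ M) := by
  simp [map_ofNat, discrFactor, formA, formB, conicU, conicV]

/-- The discriminant of the cubic `X³ + A X + B` of the family. -/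
def curveDiscr (m M : R) : R := depressedDiscr (curveA m M) (curveB m M)

lemma map_curveDiscr (φ : R →+* S) (m M : R) : φ (curveDiscr m M) = curveDiscr (φ m) (φ M) := by
  simp only [curveDiscr, depressedDiscr, map_neg, map_add, map_mul, map_pow, map_ofNat, map_curveA,
    map_curveB]

lemma curveDiscr_mul (r m M : R) : curveDiscr (r * m) (r * M) = r ^ 24 * curveDiscr m M := by
  simp only [curveDiscr, depressedDiscr, curveA_mul, curveB_mul]
  ring

lemma curveDiscr_eq (m M : R) : curveDiscr m M = -conicV m M ^ 2 * discrFactor m M := by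
  rw [curveDiscr, depressedDiscr, curveA, curveB, discrFactor]
  ring

lemma natDegree_discrFactor_zmod_37 : (discrFactor (X : (ZMod 37)[X]) 1).natDegree = 20 := by
  rw [discrFactor_X_one_zmod_37]
  compute_degree!

lemma exists_ne_zero_forall_isRoot_discrFactor : ∃ r : ℤ, r ≠ 0 ∧
    ∀ {k : Type} [CommRing k] {h : k}, (discrFactor (X : k[X]) 1).IsRoot h →
      (derivative (discrFactor (X : k[X]) 1)).IsRoot h → (r : k) = 0 := by
  set F : ℤ[X] := discrFactor X 1 with hF
  have : Fact (Nat.Prime 37) := ⟨by norm_num⟩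
  have hFmap {k : Type} [CommRing k] : F.map (Int.castRingHom k) = discrFactor X 1 := by
    simpa using map_discrFactor (mapRingHom (Int.castRingHom k)) X 1
  have hdeg : F.natDegree ≤ 20 := by
    simp only [hF, discrFactor, formA, formB, conicU, conicV]
    compute_degree
  have hdeg_map : (F.map (Int.castRingHom (ZMod 37))).natDegree = 20 := by
    rw [hFmap, natDegree_discrFactor_zmod_37]
  have hdeg_eq : F.natDegree = 20 := hdeg.antisymm (hdeg_map ▸ natDegree_map_le)
  obtain ⟨p, q, r, hr, hpq⟩ := exists_mul_add_mul_eq_C_of_isCoprime_map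
    (Int.castRingHom (ZMod 37)) (f := F) (g := derivative F) (by rw [hdeg_eq]; decide)
    (by rw [hdeg_map, hdeg_eq])
    (by rw [← derivative_map, hFmap]; exact separable_discrFactor_zmod_37)
  refine ⟨r, hr, fun {k} _ h hroot hderiv ↦ ?_⟩
  have := congrArg (fun G ↦ eval h (G.map (Int.castRingHom k))) hpq
  simpa [← derivative_map, hFmap, hroot.eq_zero, hderiv.eq_zero] using this.symm

lemma isRoot_discrFactor_of_pointSqrt_eq_zero {k : Type*} [Field k] {h : k} {i : Fin 9}
    (hden : (pointDen i : k) ≠ 0) (hconic : conicV h 1 ≠ 0) (hsqrt : pointSqrt h 1 i = 0)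
    (hderiv : pointDeriv h 1 i = 0) :
    (discrFactor (X : k[X]) 1).IsRoot h ∧ (derivative (discrFactor (X : k[X]) 1)).IsRoot h := by
  have hsqrt_dvd : X - C h ∣ pointSqrt (X : k[X]) 1 i := by
    rw [dvd_iff_isRoot, IsRoot.def, ← coe_evalRingHom, map_pointSqrt]
    simpa using hsqrt
  have hderiv_dvd : X - C h ∣ pointDeriv (X : k[X]) 1 i := by
    rw [dvd_iff_isRoot, IsRoot.def, ← coe_evalRingHom, map_pointDeriv]
    simpa using hderiv
  have hdvd : (X - C h) ^ 2 ∣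
      (-(pointDen i : k[X]) ^ 6 * conicV X 1 ^ 2) * discrFactor (X : k[X]) 1 := by
    have hdiscr := pow_six_mul_depressedDiscr (pointNum_pointDen_equation (X : k[X]) 1 i)
    rw [← curveDiscr, curveDiscr_eq, ← pointDeriv] at hdiscr
    have hrw : (-(pointDen i : k[X]) ^ 6 * conicV X 1 ^ 2) * discrFactor (X : k[X]) 1 =
      (pointDen i : k[X]) ^ 6 * (-conicV X 1 ^ 2 * discrFactor X 1) := by ring
    rw [hrw, hdiscr]
    exact dvd_add ((pow_dvd_pow_of_dvd hderiv_dvd 2).mul_right _)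
      ((pow_dvd_pow_of_dvd hsqrt_dvd 2).mul_right _)
  refine isRoot_derivative_of_sq_dvd_mul hdvd ?_
  have hconic_eval : (conicV (X : k[X]) 1).eval h = conicV h 1 := by simp [conicV]
  simp [hconic_eval, hden, hconic]

-- A common zero of `y` and `3x² + A` is a node of a fibre lying on a section, which forces the
-- discriminant to vanish doubly.
lemma exists_ne_zero_forall_pointSqrt_pointDeriv : ∃ r : ℤ, r ≠ 0 ∧
    ∀ {k : Type} [Field k] {h : k} {i : Fin 9}, pointSqrt h 1 i = 0 → pointDeriv h 1 i = 0 →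
      (r : k) = 0 := by
  obtain ⟨r, hr, hroot⟩ := exists_ne_zero_forall_isRoot_discrFactor
  have hden (i : Fin 9) : pointDen i ≠ 0 := by fin_cases i <;> decide
  have hsqrt_zero (i : Fin 9) : pointSqrt (0 : ℤ) 1 i ≠ 0 := by fin_cases i <;> decide
  refine ⟨2 * r * ∏ i, pointDen i * pointSqrt 0 1 i, mul_ne_zero (mul_ne_zero two_ne_zero hr)
    (Finset.prod_ne_zero_iff.2 fun i _ ↦ mul_ne_zero (hden i) (hsqrt_zero i)),
    fun {k} _ h i hsqrt hderiv ↦ ?_⟩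
  by_contra hne
  have hcast : ((pointSqrt (0 : ℤ) 1 i : ℤ) : k) = pointSqrt 0 1 i := by
    simpa using map_pointSqrt (Int.castRingHom k) 0 1 i
  have hi : ((pointDen i * pointSqrt 0 1 i : ℤ) : k) ≠ 0 := fun h0 ↦ hne (by
    rw [Int.cast_mul, Int.cast_prod, Finset.prod_eq_zero (Finset.mem_univ i) h0, mul_zero])
  simp only [Int.cast_mul, hcast, mul_eq_zero, not_or, Int.cast_ofNat, ne_eq] at hi hne
  have hh : h ≠ 0 := by
    rintro rfl
    exact hi.2 hsqrt
  have hconic : conicV h 1 ≠ 0 := by simpa [conicV, hne.1.1] using hh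
  obtain ⟨h₀, h₁⟩ := isRoot_discrFactor_of_pointSqrt_eq_zero hi.1 hconic hsqrt hderiv
  exact hne.1.2 (hroot h₀ h₁)

end Family

/-! ### Specialization of the parameters -/

lemma isSeparatingRoot_intCast {q : ℕ} [Fact q.Prime] {ι : Type*} [DecidableEq ι] {A B ρ : ℤ}
    {a b : ι → ℤ} {j : ι} (hroot : (q : ℤ) ∣ ρ ^ 3 + A * ρ + B) (hsimple : ¬(q : ℤ) ∣ 3 * ρ ^ 2 + A)
    (hsymbol : ∀ i, jacobiSym (a i - b i * ρ) q = if i = j then -1 else 1) :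
    IsSeparatingRoot (A : ZMod q) B (fun i ↦ a i) (fun i ↦ b i) j ρ where
  root := by exact_mod_cast (ZMod.intCast_zmod_eq_zero_iff_dvd _ q).2 hroot
  simple := by exact_mod_cast mt (ZMod.intCast_zmod_eq_zero_iff_dvd _ q).1 hsimple
  quadraticChar_eq i := by
    rw [← hsymbol i, ← jacobiSym.legendreSym.to_jacobiSym, legendreSym]
    push_cast
    rfl

/-- For each point of the family a prime modulo which, at `(m : M) = (6 : 1)`, the cubic has a
simple root separating this point from the other eight. -/
def separatingPrime : Fin 9 → ℕ := ![67, 1873, 331, 2087, 1583, 359, 1567, 1033, 2389]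

/-- The separating root modulo `separatingPrime j`. -/
def separatingRoot : Fin 9 → ℤ := ![27, 54, 75, 1264, 613, 292, 587, 985, 2249]

instance (j : Fin 9) : Fact (separatingPrime j).Prime :=
  ⟨by fin_cases j <;> simp only [separatingPrime] <;> norm_num⟩

lemma isSeparatingRoot_six_one (j : Fin 9) :
    IsSeparatingRoot (q := separatingPrime j) (curveA 6 1) (curveB 6 1) (pointNum 6 1)
      (fun i ↦ pointDen i) j (separatingRoot j) := by
  have hcast := isSeparatingRoot_intCast (q := separatingPrime j) (A := curveA 6 1)
    (B := curveB 6 1) (ρ := separatingRoot j) (a := pointNum 6 1) (b := pointDen) (j := j)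
    (by fin_cases j <;> decide) (by fin_cases j <;> decide)
    (fun i ↦ by
      fin_cases j <;> fin_cases i <;>
        simp [pointNum, pointDen, separatingRoot, separatingPrime, quadraticForm, conicU,
          conicV] <;> norm_num)
  let φ := Int.castRingHom (ZMod (separatingPrime j))
  have hA := map_curveA φ 6 1
  have hB := map_curveB φ 6 1
  have ha := fun i ↦ map_pointNum φ 6 1 i
  simp only [φ, eq_intCast, Int.cast_ofNat, Int.cast_one] at hA hB ha
  rw [← hA, ← hB, ← funext ha]
  exact hcast

lemma curveA_pos {m M : ℤ} (hM : 0 < M) (hm : 3000000 * M ≤ m) : 0 < curveA m M := by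
  have hv : 0 < conicV m M := by
    rw [conicV]
    have : 0 < m := by linarith
    positivity
  have huv : 1000000 * conicV m M ≤ conicU m M := by
    rw [conicU, conicV]
    nlinarith
  rw [curveA]
  generalize conicU m M = u at *
  generalize conicV m M = v at *
  have hu : 0 < u := by linarith
  have hcubic : 1000000 * v ^ 3 ≤ u * v ^ 2 := by nlinarith [pow_pos hv 2]
  have hmixed : 1000000 * (u * v ^ 2) ≤ u ^ 2 * v := by nlinarith [mul_pos hu hv]
  have hlead : 1000000 * (u ^ 2 * v) ≤ u ^ 3 := by nlinarith [pow_pos hu 2]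
  have hpos : 0 < u ^ 2 * v := by positivity
  refine mul_pos hv ?_
  rw [formA]
  nlinarith

/-- The modulus of the congruence conditions on `(m, M)`: modulo `5` the cubic has no root, modulo
the other primes it has a separating root. -/
def residueModulus : ℕ := 5 * ∏ j, separatingPrime j

lemma separatingPrime_dvd_residueModulus (j : Fin 9) : separatingPrime j ∣ residueModulus :=
  (Finset.dvd_prod_of_mem _ (Finset.mem_univ j)).mul_left 5

lemma isCoprime_pointSqrt_six_one (i : Fin 9) :
    IsCoprime (pointSqrt (6 : ℤ) 1 i) residueModulus := by
  rw [Int.isCoprime_iff_gcd_eq_one]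
  fin_cases i <;> decide

lemma cubic_six_one_ne_zero_zmod_five :
    ∀ x : ZMod 5, x ^ 3 + curveA 6 1 * x + curveB 6 1 ≠ 0 := by
  decide

/-- The conditions on the parameters under which nine points of the family give eight independent
ideal classes of order two in the cubic field defined by `X³ + A X + B`. -/
structure IsAdmissible (m M : ℤ) : Prop where
  pos : 0 < M
  le : 3000000 * M ≤ m
  modEq_six : m ≡ 6 [ZMOD residueModulus]
  modEq_one : M ≡ 1 [ZMOD residueModulus]
  isCoprime (i : Fin 9) : IsCoprime (pointSqrt m M i) (pointDeriv m M i)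

namespace IsAdmissible

variable {m M : ℤ} (h : IsAdmissible m M)
include h

lemma cast_eq_six {q : ℕ} (hq : q ∣ residueModulus) : (m : ZMod q) = 6 := by
  exact_mod_cast (ZMod.intCast_eq_intCast_iff m 6 q).2
    (h.modEq_six.of_dvd (Int.natCast_dvd_natCast.2 hq))

lemma cast_eq_one {q : ℕ} (hq : q ∣ residueModulus) : (M : ZMod q) = 1 := by
  exact_mod_cast (ZMod.intCast_eq_intCast_iff M 1 q).2
    (h.modEq_one.of_dvd (Int.natCast_dvd_natCast.2 hq))

lemma cast_curveA {q : ℕ} (hq : q ∣ residueModulus) :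
    ((curveA m M : ℤ) : ZMod q) = curveA 6 1 := by
  simpa [h.cast_eq_six hq, h.cast_eq_one hq] using map_curveA (Int.castRingHom (ZMod q)) m M

lemma cast_curveB {q : ℕ} (hq : q ∣ residueModulus) :
    ((curveB m M : ℤ) : ZMod q) = curveB 6 1 := by
  simpa [h.cast_eq_six hq, h.cast_eq_one hq] using map_curveB (Int.castRingHom (ZMod q)) m M

lemma cast_pointNum {q : ℕ} (hq : q ∣ residueModulus) (i : Fin 9) :
    ((pointNum m M i : ℤ) : ZMod q) = pointNum 6 1 i := by
  simpa [h.cast_eq_six hq, h.cast_eq_one hq] using map_pointNum (Int.castRingHom (ZMod q)) m M i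

lemma irreducible : Irreducible (depressedCubic ((curveA m M : ℤ) : ℚ) (curveB m M : ℤ)) := by
  have : Fact (Nat.Prime 5) := ⟨by norm_num⟩
  have hdeg := natDegree_depressedCubic (curveA m M) (curveB m M)
  have hroot (x : ZMod 5) : aeval x (depressedCubic (curveA m M) (curveB m M)) ≠ 0 := by
    have h5 : 5 ∣ residueModulus := Nat.dvd_mul_right 5 _
    rw [aeval_depressedCubic, h.cast_curveA h5, h.cast_curveB h5]
    exact cubic_six_one_ne_zero_zmod_five x
  simpa only [map_depressedCubic, eq_intCast] using irreducible_map_of_forall_aeval_zmod_ne_zero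
    (monic_depressedCubic _ _) (by lia) hdeg.le 5 hroot

theorem exists_injective_classGroup {K : Type*} [Field K] [NumberField K] {pb : PowerBasis ℚ K}
    (hpb : minpoly ℚ pb.gen = depressedCubic ((curveA m M : ℤ) : ℚ) (curveB m M : ℤ)) :
    ∃ f : Multiplicative (Fin 8 → ZMod 2) →* ClassGroup (𝓞 K), Function.Injective f := by
  refine exists_injective_classGroup_of_separatingRoots hpb (curveA_pos h.pos h.le) (b := pointDen)
    (pointNum_pointDen_equation m M) h.isCoprime (fun j ↦ ?_) (by simp)
  have hdvd := separatingPrime_dvd_residueModulus j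
  refine ⟨separatingPrime j, inferInstance, separatingRoot j, ?_⟩
  simpa only [h.cast_curveA hdvd, h.cast_curveB hdvd, h.cast_pointNum hdvd] using
    isSeparatingRoot_six_one j

end IsAdmissible

lemma exists_modEq_one_forall_prime_dvd {N r : ℕ} (hN : N ≠ 0) (hr : r ≠ 0) :
    ∃ M : ℕ, 0 < M ∧ M ≡ 1 [MOD N] ∧ ∀ p : ℕ, p.Prime → p ∣ r → p ∣ N ∨ p ∣ M := by
  set S := r.primeFactors.filter (¬· ∣ N)
  have hprime {p : ℕ} (hp : p ∈ S) : p.Prime :=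
    Nat.prime_of_mem_primeFactors (Finset.filter_subset _ _ hp)
  have hcop : (∏ p ∈ S, p).Coprime N := Nat.Coprime.prod_left fun p hp ↦
    (hprime hp).coprime_iff_not_dvd.2 (Finset.mem_filter.1 hp).2
  refine ⟨(∏ p ∈ S, p) ^ N.totient, pow_pos (Finset.prod_pos fun p hp ↦ (hprime hp).pos) _,
    Nat.ModEq.pow_totient hcop, fun p hp hpr ↦ or_iff_not_imp_left.2 fun hpN ↦ ?_⟩
  have hmem : p ∈ S := Finset.mem_filter.2 ⟨Nat.mem_primeFactors.2 ⟨hp, hpr, hr⟩, hpN⟩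
  exact dvd_pow (Finset.dvd_prod_of_mem _ hmem) (Nat.totient_pos.2 hN.bot_lt).ne'

lemma pointSqrt_one_zero {R : Type*} [CommRing R] (i : Fin 9) : pointSqrt (1 : R) 0 i = 1 := by
  fin_cases i <;> simp [pointSqrt, cubicForm, conicU, conicV]

lemma pointSqrt_div_eq_zero {k : Type*} [Field k] {m M : k} (hM : M ≠ 0) {i : Fin 9}
    (h : pointSqrt m M i = 0) : pointSqrt (m / M) 1 i = 0 := by
  have hscale := pointSqrt_mul M (m / M) 1 i
  rw [mul_div_cancel₀ m hM, mul_one, h] at hscale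
  exact (mul_eq_zero.1 hscale.symm).resolve_left (pow_ne_zero _ hM)

lemma pointDeriv_div_eq_zero {k : Type*} [Field k] {m M : k} (hM : M ≠ 0) {i : Fin 9}
    (h : pointDeriv m M i = 0) : pointDeriv (m / M) 1 i = 0 := by
  have hscale := pointDeriv_mul M (m / M) 1 i
  rw [mul_div_cancel₀ m hM, mul_one, h] at hscale
  exact (mul_eq_zero.1 hscale.symm).resolve_left (pow_ne_zero _ hM)

lemma isCoprime_of_forall_zmod_ne_zero {x y : ℤ}
    (h : ∀ (p : ℕ) [Fact p.Prime], (x : ZMod p) = 0 → (y : ZMod p) ≠ 0) : IsCoprime x y := by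
  rw [Int.isCoprime_iff_gcd_eq_one]
  by_contra hgcd
  obtain ⟨p, hp, hdvd⟩ := Nat.exists_prime_and_dvd hgcd
  have : Fact p.Prime := ⟨hp⟩
  have hdvd := Int.natCast_dvd_natCast.2 hdvd
  exact h p ((ZMod.intCast_zmod_eq_zero_iff_dvd _ _).2 (hdvd.trans (Int.gcd_dvd_left ..)))
    ((ZMod.intCast_zmod_eq_zero_iff_dvd _ _).2 (hdvd.trans (Int.gcd_dvd_right ..)))

lemma pointSqrt_six_one_ne_zero {p : ℕ} [Fact p.Prime] (hp : p ∣ residueModulus) (i : Fin 9) :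
    pointSqrt (6 : ZMod p) 1 i ≠ 0 := by
  intro hzero
  have hcast := map_pointSqrt (Int.castRingHom (ZMod p)) 6 1 i
  simp only [eq_intCast, Int.cast_ofNat, Int.cast_one, hzero,
    ZMod.intCast_zmod_eq_zero_iff_dvd] at hcast
  have hunit := (isCoprime_pointSqrt_six_one i).isUnit_of_dvd' hcast (Int.natCast_dvd_natCast.2 hp)
  exact (Nat.prime_iff_prime_int.1 Fact.out).not_isUnit hunit

-- Three kinds of primes: those of the residue condition, those of `M`, where `(m : M) = (1 : 0)`,
-- and the remaining ones, which `r` controls.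
lemma isCoprime_pointSqrt_pointDeriv {m M r : ℤ}
    (hroot : ∀ {k : Type} [Field k] {h : k} {i : Fin 9}, pointSqrt h 1 i = 0 →
      pointDeriv h 1 i = 0 → (r : k) = 0)
    (hr : ∀ p : ℕ, p.Prime → (p : ℤ) ∣ r → p ∣ residueModulus ∨ (p : ℤ) ∣ M)
    (hm_six : m ≡ 6 [ZMOD residueModulus]) (hM_one : M ≡ 1 [ZMOD residueModulus])
    (hm_one : m ≡ 1 [ZMOD M]) (i : Fin 9) : IsCoprime (pointSqrt m M i) (pointDeriv m M i) := by
  refine isCoprime_of_forall_zmod_ne_zero fun p hp hsqrt hderiv ↦ ?_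
  rw [← eq_intCast (Int.castRingHom (ZMod p)), map_pointSqrt, eq_intCast, eq_intCast] at hsqrt
  rw [← eq_intCast (Int.castRingHom (ZMod p)), map_pointDeriv, eq_intCast, eq_intCast] at hderiv
  by_cases hp_residue : p ∣ residueModulus
  · have hdvd := Int.natCast_dvd_natCast.2 hp_residue
    rw [(ZMod.intCast_eq_intCast_iff m 6 p).2 (hm_six.of_dvd hdvd),
      (ZMod.intCast_eq_intCast_iff M 1 p).2 (hM_one.of_dvd hdvd)] at hsqrt
    exact pointSqrt_six_one_ne_zero hp_residue i (mod_cast hsqrt)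
  by_cases hp_M : (p : ℤ) ∣ M
  · rw [(ZMod.intCast_eq_intCast_iff m 1 p).2 (hm_one.of_dvd hp_M),
      (ZMod.intCast_zmod_eq_zero_iff_dvd M p).2 hp_M, Int.cast_one, pointSqrt_one_zero] at hsqrt
    exact one_ne_zero hsqrt
  · have hM : (M : ZMod p) ≠ 0 := mt (ZMod.intCast_zmod_eq_zero_iff_dvd M p).1 hp_M
    have hr_zero := hroot (pointSqrt_div_eq_zero hM hsqrt) (pointDeriv_div_eq_zero hM hderiv)
    exact (hr p hp.out ((ZMod.intCast_zmod_eq_zero_iff_dvd r p).1 hr_zero)).elim hp_residue hp_M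

lemma exists_forall_isAdmissible : ∃ M : ℕ, 0 < M ∧ ∀ m : ℤ, 3000000 * M ≤ m →
    m ≡ 1 + 5 * M [ZMOD (residueModulus * M : ℕ)] → IsAdmissible m M := by
  obtain ⟨r, hr, hroot⟩ := exists_ne_zero_forall_pointSqrt_pointDeriv
  obtain ⟨M, hM, hM_one, hM_dvd⟩ := exists_modEq_one_forall_prime_dvd (N := residueModulus)
    (by decide) (Int.natAbs_ne_zero.2 hr)
  have hM_one : (M : ℤ) ≡ 1 [ZMOD residueModulus] := mod_cast Int.natCast_modEq_iff.2 hM_one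
  refine ⟨M, hM, fun m hle hm ↦ ?_⟩
  have hm_six : m ≡ 6 [ZMOD residueModulus] :=
    (hm.of_dvd (by simp)).trans ((hM_one.mul_left 5).add_left 1)
  have hm_one : m ≡ 1 [ZMOD M] :=
    (hm.of_dvd (by simp)).trans (by simp [Int.modEq_iff_dvd])
  exact ⟨mod_cast hM, hle, hm_six, hM_one, isCoprime_pointSqrt_pointDeriv hroot
    (fun p hp hdvd ↦ (hM_dvd p hp (Int.natCast_dvd.1 hdvd)).imp_right Int.natCast_dvd_natCast.2)
    hm_six hM_one hm_one⟩

/-! ### Pairwise distinct discriminants -/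

lemma infinite_setOf_prime_not_isSquare {D : ℤ} {b : ℕ} (hb : Odd b) (hD : jacobiSym D b = -1) :
    {p : ℕ | p.Prime ∧ ¬IsSquare (D : ZMod p)}.Infinite := by
  have : NeZero b := ⟨hb.pos.ne'⟩
  have hcop : D.gcd b = 1 := by
    by_contra hgcd
    rw [jacobiSym.eq_zero_iff_not_coprime.2 hgcd] at hD
    exact absurd hD (by decide)
  have hD_ne : D ≠ 0 := by
    rintro rfl
    rw [Int.zero_gcd, Int.natAbs_natCast] at hcop
    rw [hcop, jacobiSym.one_right] at hD
    exact absurd hD (by decide)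
  have hb_cop : IsCoprime (b : ℤ) (4 * D.natAbs : ℕ) := by
    rw [Nat.isCoprime_iff_coprime]
    exact Nat.Coprime.mul_right ((Nat.coprime_two_right.2 hb).pow_right 2)
      (Nat.coprime_comm.1 (by simpa [Int.gcd] using hcop))
  refine Set.infinite_of_forall_exists_gt fun n ↦ ?_
  obtain ⟨p, hpn, hp, hmod⟩ :=
    Nat.forall_exists_prime_gt_and_zmodEq (max n 2) (by positivity) hb_cop
  have : Fact p.Prime := ⟨hp⟩
  refine ⟨p, ⟨hp, ?_⟩, (le_max_left n 2).trans_lt hpn⟩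
  have hodd : Odd p := hp.odd_of_ne_two ((le_max_right n 2).trans_lt hpn).ne'
  rw [← legendreSym.eq_neg_one_iff, jacobiSym.legendreSym.to_jacobiSym,
    jacobiSym.mod_right D hodd, (Int.natCast_modEq_iff.1 hmod : p % _ = b % _),
    ← jacobiSym.mod_right D hb, hD]

lemma exists_ge_forall_modEq {ι : Type*} (s : Finset ι) {n : ι → ℕ} (hn : ∀ i ∈ s, n i ≠ 0)
    (hcop : Set.Pairwise s (Function.onFun Nat.Coprime n)) (a : ι → ℕ) (L : ℕ) :
    ∃ m, L ≤ m ∧ ∀ i ∈ s, m ≡ a i [MOD n i] := by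
  obtain ⟨m, hm⟩ := Nat.chineseRemainderOfFinset a n s hn hcop
  have hprod : 0 < ∏ i ∈ s, n i := Finset.prod_pos fun i hi ↦ Nat.pos_of_ne_zero (hn i hi)
  refine ⟨m + L * ∏ i ∈ s, n i, ?_, fun i hi ↦ ?_⟩
  · exact (Nat.le_mul_of_pos_right L hprod).trans (Nat.le_add_left _ m)
  · have hdvd : n i ∣ L * ∏ i ∈ s, n i := (Finset.dvd_prod_of_mem n hi).mul_left L
    simpa using (hm i hi).add (Nat.modEq_zero_iff_dvd.2 hdvd)

lemma exists_seq_modEq {P : Set ℕ} (hP : P.Infinite) (hprime : ∀ p ∈ P, p.Prime) {c : ℕ}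
    (hc : c ≠ 0) (L r s t : ℕ) :
    ∃ p m : ℕ → ℕ, ∀ k, p k ∈ P ∧ (p k).Coprime c ∧ L ≤ m k ∧ m k ≡ r [MOD c] ∧
      m k ≡ s [MOD p k] ∧ ∀ j < k, m k ≡ t [MOD p j] := by
  have hP' : (P \ Set.Iic c).Infinite := hP.sdiff (Set.finite_Iic c)
  let p (k : ℕ) : ℕ := hP'.natEmbedding _ k
  have hmem (k : ℕ) : p k ∈ P := (hP'.natEmbedding _ k).2.1
  have hcop (k : ℕ) : (p k).Coprime c :=
    Nat.coprime_of_lt_prime hc (not_le.1 (hP'.natEmbedding _ k).2.2) (hprime _ (hmem k))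
  have hpair {j k : ℕ} (hjk : j ≠ k) : (p j).Coprime (p k) :=
    (Nat.coprime_primes (hprime _ (hmem j)) (hprime _ (hmem k))).2 fun h ↦
      hjk ((hP'.natEmbedding _).injective (Subtype.ext h))
  let modulus (o : Option ℕ) : ℕ := o.elim c p
  have hmodulus (o : Option ℕ) : modulus o ≠ 0 := by
    cases o with
    | none => exact hc
    | some j => exact (hprime _ (hmem j)).ne_zero
  have hmodulus_pair : Pairwise (Function.onFun Nat.Coprime modulus) := by
    rintro (_ | i) (_ | j) hij
    · exact absurd rfl hij
    · exact (hcop j).symm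
    · exact hcop i
    · exact hpair fun h ↦ hij (congrArg some h)
  choose m hle hm using fun k ↦ exists_ge_forall_modEq (Finset.range (k + 1)).insertNone
    (fun o _ ↦ hmodulus o) (hmodulus_pair.set_pairwise _)
    (fun o ↦ o.elim r fun j ↦ if j = k then s else t) L
  refine ⟨p, m, fun k ↦ ⟨hmem k, hcop k, hle k, hm k none (by simp), ?_, fun j hj ↦ ?_⟩⟩
  · simpa [modulus] using hm k (some k) (by simp)
  · simpa [modulus, hj.ne] using hm k (some j) (by simp [hj.le])

lemma not_isSquare_curveDiscr_mul {p : ℕ} [Fact p.Prime] {m m' M : ℤ} (hM : (M : ZMod p) ≠ 0)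
    (hns : ¬IsSquare ((curveDiscr 1 1 * curveDiscr 2 1 : ℤ) : ZMod p))
    (hm : (m : ZMod p) = M) (hm' : (m' : ZMod p) = M * 2) :
    ¬IsSquare (curveDiscr m M * curveDiscr m' M) := by
  intro hsq
  refine hns ?_
  have hcast (a b : ℤ) : ((curveDiscr a b : ℤ) : ZMod p) = curveDiscr (a : ZMod p) b :=
    map_curveDiscr (Int.castRingHom (ZMod p)) a b
  have hsq_zmod := hsq.map (Int.castRingHom (ZMod p))
  have hscale₁ := curveDiscr_mul (M : ZMod p) 1 1
  have hscale₂ := curveDiscr_mul (M : ZMod p) 2 1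
  rw [mul_one] at hscale₁ hscale₂
  rw [map_mul, eq_intCast, eq_intCast, hcast, hcast, hm, hm', hscale₁, hscale₂] at hsq_zmod
  obtain ⟨r, hr⟩ := hsq_zmod
  refine ⟨r / M ^ 24, ?_⟩
  rw [Int.cast_mul, hcast, hcast, div_mul_div_comm, ← hr, Int.cast_one, Int.cast_ofNat,
    mul_mul_mul_comm, mul_div_cancel_left₀ _ (mul_ne_zero (pow_ne_zero 24 hM) (pow_ne_zero 24 hM))]

lemma jacobiSym_curveDiscr_mul_five : jacobiSym (curveDiscr 1 1 * curveDiscr 2 1) 5 = -1 := by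
  have hmod : curveDiscr (1 : ℤ) 1 * curveDiscr 2 1 % (5 : ℕ) = 3 := by decide
  rw [jacobiSym.mod_left, hmod]
  norm_num

-- With `m k ≡ 2M` modulo `p k` and `m l ≡ M` modulo `p k` for `l > k`, homogeneity makes the
-- product of the two discriminants a square times `curveDiscr 1 1 * curveDiscr 2 1` modulo `p k`.
lemma exists_seq_isAdmissible :
    ∃ (M : ℤ) (m : ℕ → ℤ), (∀ k, IsAdmissible (m k) M) ∧
      Pairwise fun k l ↦ ¬IsSquare (curveDiscr (m k) M * curveDiscr (m l) M) := by
  obtain ⟨M, hM, hadm⟩ := exists_forall_isAdmissible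
  have hc : residueModulus * M ≠ 0 := mul_ne_zero (by decide) hM.ne'
  obtain ⟨p, m, hpm⟩ := exists_seq_modEq
    (infinite_setOf_prime_not_isSquare (by decide) jacobiSym_curveDiscr_mul_five)
    (fun _ hp ↦ hp.1) hc (3000000 * M) (1 + 5 * M) (M * 2) M
  have hlt {k l : ℕ} (hkl : k < l) :
      ¬IsSquare (curveDiscr (m l : ℤ) M * curveDiscr (m k : ℤ) M) := by
    obtain ⟨⟨hp, hns⟩, hcop, -, -, hk, -⟩ := hpm k
    obtain ⟨-, -, -, -, -, hl⟩ := hpm l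
    have : Fact (p k).Prime := ⟨hp⟩
    refine not_isSquare_curveDiscr_mul (p := p k) ?_ hns ?_ ?_
    · rw [Int.cast_natCast, Ne, ZMod.natCast_eq_zero_iff, ← hp.coprime_iff_not_dvd]
      exact hcop.coprime_mul_left_right
    · exact_mod_cast (ZMod.natCast_eq_natCast_iff _ _ _).2 (hl k hkl)
    · exact_mod_cast (ZMod.natCast_eq_natCast_iff _ _ _).2 hk
  refine ⟨M, fun k ↦ m k, fun k ↦ ?_, fun k l hkl ↦ ?_⟩
  · obtain ⟨-, -, hle, hmod, -⟩ := hpm k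
    exact hadm (m k) (mod_cast hle) (mod_cast Int.natCast_modEq_iff.2 hmod)
  · rcases hkl.lt_or_gt with h | h
    · rw [mul_comm]
      exact hlt h
    · exact hlt h

/-- There are infinitely many pairwise non-isomorphic cubic number fields whose ideal
class group contains a subgroup isomorphic to `(ℤ/2ℤ)^8`: the set of intermediate
fields `K` of `ℚ̄/ℚ` with `[K : ℚ] = 3` admitting an injective group homomorphism
from `(ℤ/2ℤ)^8` into the ideal class group of the ring of integers of `K` is infinite. -/
theorem infinitely_many_cubic_fields_with_two_rank_eight :
    {K : IntermediateField ℚ (AlgebraicClosure ℚ) |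
      Module.finrank ℚ K = 3 ∧
      ∃ f : Multiplicative (Fin 8 → ZMod 2) →*
          ClassGroup (NumberField.RingOfIntegers K),
        Function.Injective f}.Infinite := by
  obtain ⟨M, m, hadm, hdiscr⟩ := exists_seq_isAdmissible
  choose K pb hpb using fun k ↦ exists_intermediateField_powerBasis (AlgebraicClosure ℚ)
    (hadm k).irreducible (monic_depressedCubic _ _)
  have (k : ℕ) : NumberField (K k) := { to_finiteDimensional := (pb k).finite }
  have hinj : Function.Injective K := by
    intro j k hjk
    by_contra hne
    obtain ⟨pb', hpb'⟩ : ∃ pb' : PowerBasis ℚ (K j), minpoly ℚ pb'.gen = minpoly ℚ (pb k).gen := by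
      rw [hjk]
      exact ⟨pb k, rfl⟩
    exact hdiscr hne (isSquare_depressedDiscr_mul (hpb j) (hpb'.trans (hpb k)))
  exact Set.infinite_of_injective_forall_mem hinj fun k ↦
    ⟨depressedCubic.finrank_eq_three (hpb k), (hadm k).exists_injective_classGroup (hpb k)⟩
end

section
/- The eight points of the projective plane ℙ²(ℚ) with homogeneous coordinates (0:−2:1), (3:−9:1), (3:7:1), (8:26:1), (15:63:1), (24:124:1), (48:342:1), (0:0:1) are in general position: (a) no three of them are collinear, i.e., for any three distinct points among them the 3×3 matrix of their coordinate vectors has nonzero determinant; (b) no six of them lie on a conic, i.e., there is no nonzero homogeneous polynomial of degree 2 in ℚ[x,y,z] vanishing at six distinct points among them; (c) every nonzero homogeneous cubic polynomial F ∈ ℚ[x,y,z] vanishing at all eight points is nonsingular at each of them, i.e., at each of the eight points at least one of the partial derivatives F_x, F_y, F_z does not vanish. -/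
open MvPolynomial

/-- The eight rational points of Example 2.6, given by homogeneous coordinate
vectors in `ℚ³`. -/
def examplePoints : Fin 8 → Fin 3 → ℚ :=
  ![![0, -2, 1], ![3, -9, 1], ![3, 7, 1], ![8, 26, 1],
    ![15, 63, 1], ![24, 124, 1], ![48, 342, 1], ![0, 0, 1]]

/-! The eight points lie on a cuspidal cubic: in suitable coordinates they are `(t² : t³ : 1)`
for `t = -1, -2, 2, 3, 4, 5, 7, 1`. Restricting a form `F` of degree `d` to this curve gives a
polynomial `F(t², t³, 1)` of degree at most `3d` without linear term, because the parametrization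
has zero derivative at the cusp `t = 0`. By Vieta, `3d` nonzero roots of such a polynomial,
counted with multiplicity, have reciprocals summing to zero unless the polynomial vanishes. So no
three of the points are collinear and no six lie on a conic as soon as no three and no six of the
reciprocals `t⁻¹` sum to zero. A cubic through all eight points that is singular at one of them
restricts to a polynomial with a double root there, hence with nine roots; if the nine
reciprocals do not sum to zero, the cubic is a multiple of the cuspidal one, whose only singular
point is the cusp. -/

/-- Eight points of the projective plane over `K`, given by coordinate vectors, are in general
position if no three are collinear, no six lie on a conic, and every cubic through all of them is
nonsingular at each of them. -/
def InGeneralPosition {K : Type*} [Field K] (p : Fin 8 → Fin 3 → K) : Prop :=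
  (∀ i j k : Fin 8, i ≠ j → i ≠ k → j ≠ k → (Matrix.of ![p i, p j, p k]).det ≠ 0) ∧
  (∀ F : MvPolynomial (Fin 3) K, F ≠ 0 → F.IsHomogeneous 2 →
    ¬∃ s : Finset (Fin 8), s.card = 6 ∧ ∀ i ∈ s, eval (p i) F = 0) ∧
  (∀ F : MvPolynomial (Fin 3) K, F ≠ 0 → F.IsHomogeneous 3 → (∀ i, eval (p i) F = 0) →
    ∀ i, ∃ m : Fin 3, eval (p i) (pderiv m F) ≠ 0)

section MultivariatePolynomials

variable {σ R : Type*} [CommSemiring R]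

theorem derivation_aeval [Fintype σ] {A M : Type*} [CommSemiring A] [Algebra R A]
    [AddCommMonoid M] [Module R M] [Module A M] (D : Derivation R A M) (f : σ → A)
    (F : MvPolynomial σ R) :
    D (aeval f F) = ∑ i, aeval f (pderiv i F) • D (f i) := by
  classical
  induction F using MvPolynomial.induction_on with
  | C a => simp
  | add F G hF hG => simp only [map_add, hF, hG, add_smul, Finset.sum_add_distrib]
  | mul_X F n hF =>
    simp only [map_mul, Derivation.leibniz, hF, pderiv_X, map_add, aeval_X, smul_eq_mul, add_smul,
      Finset.sum_add_distrib, mul_smul, Finset.smul_sum]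
    simp [Pi.single_apply, apply_ite, ite_smul]

theorem aeval_X_pow_eq_sum_weight (w : σ → ℕ) (F : MvPolynomial σ R) :
    aeval (fun i ↦ (Polynomial.X : Polynomial R) ^ w i) F =
      ∑ m ∈ F.support, Polynomial.monomial (Finsupp.weight w m) (coeff m F) := by
  rw [aeval_def, eval₂_eq]
  refine Finset.sum_congr rfl fun m _ ↦ ?_
  rw [← Polynomial.C_mul_X_pow_eq_monomial, Finsupp.weight_apply, Finsupp.sum,
    ← Finset.prod_pow_eq_pow_sum]
  simp [← pow_mul, mul_comm]

theorem eq_zero_of_aeval_X_pow_eq_zero {w : σ → ℕ} {F : MvPolynomial σ R}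
    (hw : Set.InjOn (Finsupp.weight w) (F.support : Set (σ →₀ ℕ)))
    (hF : aeval (fun i ↦ (Polynomial.X : Polynomial R) ^ w i) F = 0) : F = 0 := by
  by_contra hne
  obtain ⟨m, hm⟩ := support_nonempty.mpr hne
  have hcoeff : coeff m F = 0 := by
    rw [aeval_X_pow_eq_sum_weight] at hF
    have h := congrArg (Polynomial.coeff · (Finsupp.weight w m)) hF
    simp only [Polynomial.finsetSum_coeff, Polynomial.coeff_monomial, Polynomial.coeff_zero] at h
    rwa [Finset.sum_eq_single_of_mem m hm fun n hn hnm ↦ if_neg fun h ↦ hnm (hw hn hm h),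
      if_pos rfl] at h
  exact mem_support_iff.mp hm hcoeff

end MultivariatePolynomials

section LinearChangeOfCoordinates

variable {m n R : Type*} [Fintype n] [CommSemiring R]

theorem eval_bind₁_toMvPolynomial (A : Matrix m n R) (v : n → R) (F : MvPolynomial m R) :
    eval v (bind₁ A.toMvPolynomial F) = eval (A.mulVec v) F := by
  have hcoord : (fun i ↦ aeval v (A.toMvPolynomial i)) = A.mulVec v :=
    funext fun i ↦ A.toMvPolynomial_eval_eq_apply i v
  rw [← coe_aeval_eq_eval, ← coe_aeval_eq_eval, RingHom.coe_coe, RingHom.coe_coe, aeval_bind₁,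
    hcoord]

theorem bind₁_toMvPolynomial_injective [DecidableEq n] {A : Matrix n n R} (hA : IsUnit A) :
    Function.Injective (bind₁ A.toMvPolynomial) := by
  obtain ⟨B, hAB⟩ := hA.exists_right_inv
  refine Function.LeftInverse.injective (g := bind₁ B.toMvPolynomial) fun F ↦ ?_
  have hX (i : n) : bind₁ B.toMvPolynomial (A.toMvPolynomial i) = X i := by
    rw [← Matrix.toMvPolynomial_mul, hAB, Matrix.toMvPolynomial_one]
  rw [bind₁_bind₁]
  simp only [hX]
  exact aeval_X_left_apply F

theorem eval_pderiv_bind₁_toMvPolynomial_eq_zero [Finite m] {A : Matrix m n R} {v : n → R}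
    {F : MvPolynomial m R} (hF : ∀ i, eval (A.mulVec v) (pderiv i F) = 0) (j : n) :
    eval v (pderiv j (bind₁ A.toMvPolynomial F)) = 0 := by
  cases nonempty_fintype m
  have chain_rule := derivation_aeval (pderiv j) A.toMvPolynomial F
  rw [← bind₁] at chain_rule
  simp [chain_rule, eval_bind₁_toMvPolynomial, hF]

theorem InGeneralPosition.mulVec {K : Type*} [Field K] {p : Fin 8 → Fin 3 → K}
    (hp : InGeneralPosition p) {A : Matrix (Fin 3) (Fin 3) K} (hA : IsUnit A) :
    InGeneralPosition fun i ↦ A.mulVec (p i) := by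
  obtain ⟨no_line, no_conic, cubic_nonsingular⟩ := hp
  have bind₁_ne_zero {F : MvPolynomial (Fin 3) K} (hF : F ≠ 0) : bind₁ A.toMvPolynomial F ≠ 0 :=
    (map_ne_zero_iff _ (bind₁_toMvPolynomial_injective hA)).mpr hF
  have isHomogeneous_bind₁ {F : MvPolynomial (Fin 3) K} {d : ℕ} (hF : F.IsHomogeneous d) :
      (bind₁ A.toMvPolynomial F).IsHomogeneous d := by
    simpa using hF.aeval A.toMvPolynomial A.toMvPolynomial_isHomogeneous
  refine ⟨fun i j k hij hik hjk ↦ ?_, fun F hne hF ⟨s, hs, hvan⟩ ↦ ?_, fun F hne hF hvan i ↦ ?_⟩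
  · have hrows : Matrix.of ![A.mulVec (p i), A.mulVec (p j), A.mulVec (p k)] =
        Matrix.of ![p i, p j, p k] * A.transpose := by
      ext r c
      fin_cases r <;> simp [Matrix.mul_apply, Matrix.mulVec, dotProduct, mul_comm]
    rw [hrows, Matrix.det_mul, Matrix.det_transpose]
    exact mul_ne_zero (no_line i j k hij hik hjk) ((A.isUnit_iff_isUnit_det.mp hA).ne_zero)
  · refine no_conic _ (bind₁_ne_zero hne) (isHomogeneous_bind₁ hF) ⟨s, hs, fun i hi ↦ ?_⟩
    rw [eval_bind₁_toMvPolynomial, hvan i hi]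
  · by_contra! hsing
    obtain ⟨j, hj⟩ := cubic_nonsingular _ (bind₁_ne_zero hne) (isHomogeneous_bind₁ hF)
      (fun i ↦ by rw [eval_bind₁_toMvPolynomial, hvan i]) i
    exact hj (eval_pderiv_bind₁_toMvPolynomial_eq_zero hsing j)

end LinearChangeOfCoordinates

section Roots

variable {R : Type*} [CommRing R] [IsDomain R] {p : Polynomial R}

theorem map_val_le_roots {ι : Type*} {s : Finset ι} {t : ι → R} (ht : Set.InjOn t s)
    (hp : p ≠ 0) (hroot : ∀ i ∈ s, p.IsRoot (t i)) : s.val.map t ≤ p.roots := by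
  refine (Multiset.le_iff_subset (s.nodup.map_on fun _ hi _ hj h ↦ ht hi hj h)).mpr fun a ha ↦ ?_
  obtain ⟨i, hi, rfl⟩ := Multiset.mem_map.mp ha
  exact (Polynomial.mem_roots hp).mpr (hroot i hi)

theorem cons_le_roots_of_isRoot_derivative {s : Multiset R} {a : R} (hp : p ≠ 0) (hs : s.Nodup)
    (hle : s ≤ p.roots) (ha : p.IsRoot a) (ha' : p.derivative.IsRoot a) : a ::ₘ s ≤ p.roots := by
  classical
  refine Multiset.le_iff_count.mpr fun b ↦ ?_
  obtain rfl | hba := eq_or_ne b a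
  · have hdouble : 1 < p.rootMultiplicity b :=
      (Polynomial.one_lt_rootMultiplicity_iff_isRoot hp).mpr ⟨ha, ha'⟩
    have hsimple : s.count b ≤ 1 := Multiset.nodup_iff_count_le_one.mp hs b
    rw [Multiset.count_cons_self, Polynomial.count_roots]
    lia
  · rw [Multiset.count_cons_of_ne hba]
    exact Multiset.le_iff_count.mp hle b

end Roots

section PolynomialsWithoutLinearTerm

variable {K : Type*} [Field K] {p : Polynomial K}

theorem sum_inv_roots_eq_zero_of_coeff_one_eq_zero (hp : p.Splits) (hp0 : p.eval 0 ≠ 0)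
    (hp1 : p.coeff 1 = 0) : (p.roots.map (·⁻¹)).sum = 0 := by
  have h := hp.eval_derivative_div_eval_of_ne_zero hp0
  have hderiv : p.derivative.eval 0 = 0 := by
    rw [← Polynomial.coeff_zero_eq_eval_zero, Polynomial.coeff_derivative, hp1, zero_mul]
  simpa [hderiv, inv_neg] using h.symm

theorem eq_zero_of_coeff_one_eq_zero_of_sum_inv_ne_zero {s : Multiset K}
    (hs : p ≠ 0 → s ≤ p.roots) (hdeg : p.natDegree ≤ s.card) (hp1 : p.coeff 1 = 0)
    (hs0 : 0 ∉ s) (hsum : (s.map (·⁻¹)).sum ≠ 0) : p = 0 := by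
  by_contra hp
  have hroots : p.roots = s :=
    (Multiset.eq_of_le_of_card_le (hs hp) (p.card_roots'.trans hdeg)).symm
  have hsplits : p.Splits := by
    rw [Polynomial.splits_iff_card_roots, hroots]
    exact le_antisymm (hroots ▸ p.card_roots') hdeg
  have hp0 : p.eval 0 ≠ 0 := fun h ↦ hs0 (hroots ▸ (Polynomial.mem_roots hp).mpr h)
  exact hsum (hroots ▸ sum_inv_roots_eq_zero_of_coeff_one_eq_zero hsplits hp0 hp1)

end PolynomialsWithoutLinearTerm

section CuspidalCubic

variable {R : Type*} [CommRing R]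

/-- The point with parameter `t` on the cuspidal cubic `x³ = y²z`, normalized so that `z = 1`. Its
cusp is the point with parameter `0`; the smooth point at infinity `(0 : 1 : 0)` is left out. -/
def cuspidalPoint (t : R) : Fin 3 → R := ![t ^ 2, t ^ 3, 1]

/-- The restriction `F(t², t³, 1)` of a polynomial `F` to the cuspidal cubic, as a polynomial in the
parameter `t`. -/
noncomputable def restrictCuspidal : MvPolynomial (Fin 3) R →ₐ[R] Polynomial R :=
  aeval fun m ↦ Polynomial.X ^ (![2, 3, 0] : Fin 3 → ℕ) m

theorem eval_restrictCuspidal (t : R) (F : MvPolynomial (Fin 3) R) :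
    (restrictCuspidal F).eval t = eval (cuspidalPoint t) F := by
  have hpoint : cuspidalPoint t = fun m ↦ t ^ (![2, 3, 0] : Fin 3 → ℕ) m := by
    ext m
    fin_cases m <;> simp [cuspidalPoint]
  rw [hpoint, restrictCuspidal, ← Polynomial.coe_aeval_eq_eval, comp_aeval_apply,
    ← coe_aeval_eq_eval, RingHom.coe_coe]
  simp

theorem derivative_restrictCuspidal (F : MvPolynomial (Fin 3) R) :
    (restrictCuspidal F).derivative =
      restrictCuspidal (pderiv 0 F) * (2 * Polynomial.X) +
        restrictCuspidal (pderiv 1 F) * (3 * Polynomial.X ^ 2) := by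
  have h := derivation_aeval (Polynomial.derivative' (R := R))
    (fun m ↦ Polynomial.X ^ (![2, 3, 0] : Fin 3 → ℕ) m) F
  simpa [Fin.sum_univ_three, restrictCuspidal] using h

theorem isRoot_derivative_restrictCuspidal {F : MvPolynomial (Fin 3) R} {t : R}
    (hsing : ∀ m, eval (cuspidalPoint t) (pderiv m F) = 0) :
    (restrictCuspidal F).derivative.IsRoot t := by
  simp [Polynomial.IsRoot, derivative_restrictCuspidal, eval_restrictCuspidal, hsing]

theorem coeff_one_restrictCuspidal (F : MvPolynomial (Fin 3) R) :
    (restrictCuspidal F).coeff 1 = 0 := by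
  have h := congrArg (Polynomial.coeff · 0) (derivative_restrictCuspidal F)
  simpa [Polynomial.coeff_derivative, Polynomial.mul_coeff_zero] using h

theorem natDegree_restrictCuspidal_le {F : MvPolynomial (Fin 3) R} {d : ℕ}
    (hF : F.IsHomogeneous d) : (restrictCuspidal F).natDegree ≤ d * 3 := by
  refine aeval_natDegree_le F hF.totalDegree_le _ fun m ↦
    (Polynomial.natDegree_X_pow_le _).trans ?_
  fin_cases m <;> simp

/-- The equation `x³ - y²z` of the cuspidal cubic. -/
noncomputable def cuspidalCubic : MvPolynomial (Fin 3) R := X 0 ^ 3 - X 1 ^ 2 * X 2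

theorem restrictCuspidal_cuspidalCubic :
    restrictCuspidal (cuspidalCubic : MvPolynomial _ R) = 0 := by
  simp [restrictCuspidal, cuspidalCubic, ← pow_mul]

theorem isHomogeneous_cuspidalCubic : (cuspidalCubic : MvPolynomial _ R).IsHomogeneous 3 :=
  (isHomogeneous_X_pow 0 3).sub ((isHomogeneous_X_pow 1 2).mul (isHomogeneous_X R 2))

theorem coeff_single_zero_three_cuspidalCubic :
    coeff (Finsupp.single 0 3) (cuspidalCubic : MvPolynomial _ R) = 1 := by
  have h : Finsupp.single (0 : Fin 3) 3 ≠ Finsupp.single 1 2 + Finsupp.single 2 1 :=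
    fun h ↦ by simpa using DFunLike.congr_fun h 0
  have hmon : (X 1 ^ 2 * X 2 : MvPolynomial (Fin 3) R) =
      monomial (Finsupp.single 1 2 + Finsupp.single 2 1) 1 := by
    rw [X_pow_eq_monomial, X, monomial_mul, one_mul]
  simp [cuspidalCubic, hmon, coeff_X_pow, coeff_monomial, h.symm]

-- Among the monomials of degree at most three only `x³` and `y²z` agree on the curve.
theorem eq_zero_of_restrictCuspidal_eq_zero {F : MvPolynomial (Fin 3) R} {d : ℕ} (hd : d ≤ 3)
    (hF : F.IsHomogeneous d) (hx : coeff (Finsupp.single 0 3) F = 0)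
    (hres : restrictCuspidal F = 0) : F = 0 := by
  refine eq_zero_of_aeval_X_pow_eq_zero (fun a ha b hb hab ↦ ?_) hres
  have sum_eq {m : Fin 3 →₀ ℕ} (hm : m ∈ F.support) : m 0 + m 1 + m 2 = d := by
    have hdegree : m.degree = d := by
      by_contra h
      exact mem_support_iff.mp hm (hF.coeff_eq_zero h)
    rwa [Finsupp.degree_eq_sum, Fin.sum_univ_three] at hdegree
  have ne_three {m : Fin 3 →₀ ℕ} (hm : m ∈ F.support) : m 0 ≠ 3 := fun h ↦ by
    have hsum := sum_eq hm
    have : m = Finsupp.single 0 3 := by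
      ext i
      match i with
      | 0 | 1 | 2 => grind
    exact mem_support_iff.mp hm (this ▸ hx)
  have hweight : 2 * a 0 + 3 * a 1 = 2 * b 0 + 3 * b 1 := by
    simpa [Finsupp.weight_apply, Finsupp.sum_fintype, Fin.sum_univ_three, mul_comm] using hab
  have hsum_a := sum_eq ha
  have hsum_b := sum_eq hb
  have ha_three := ne_three ha
  have hb_three := ne_three hb
  ext i
  match i with
  | 0 | 1 | 2 => lia

theorem eq_C_mul_cuspidalCubic_of_restrictCuspidal_eq_zero {F : MvPolynomial (Fin 3) R}
    (hF : F.IsHomogeneous 3) (hres : restrictCuspidal F = 0) :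
    F = C (coeff (Finsupp.single 0 3) F) * cuspidalCubic := by
  refine sub_eq_zero.mp (eq_zero_of_restrictCuspidal_eq_zero le_rfl ?_ ?_ ?_)
  · exact hF.sub (isHomogeneous_cuspidalCubic.C_mul _)
  · simp [coeff_single_zero_three_cuspidalCubic]
  · simp [hres, restrictCuspidal_cuspidalCubic]

theorem exists_eval_pderiv_cuspidalCubic_ne_zero [IsReduced R] {t : R} (ht : t ≠ 0) :
    ∃ m : Fin 3, eval (cuspidalPoint t) (pderiv m cuspidalCubic) ≠ 0 := by
  by_contra! h
  have hx : 3 * t ^ 4 = 0 := by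
    simpa [cuspidalCubic, cuspidalPoint, pderiv_X, ← pow_mul] using h 0
  have hy : 2 * t ^ 3 = 0 := by
    simpa [cuspidalCubic, cuspidalPoint, pderiv_X] using h 1
  exact pow_ne_zero 4 ht (by linear_combination hx - t * hy)

theorem det_cuspidalPoint (a b c : R) :
    (Matrix.of ![cuspidalPoint a, cuspidalPoint b, cuspidalPoint c]).det =
      (a - b) * (b - c) * (c - a) * (a * b + b * c + c * a) := by
  simp only [Matrix.det_fin_three, Matrix.of_apply, cuspidalPoint, Matrix.cons_val]
  ring

end CuspidalCubic

section PointsOnCuspidalCubic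

variable {K : Type*} [Field K]

theorem det_cuspidalPoint_ne_zero {a b c : K} (hab : a ≠ b) (hac : a ≠ c) (hbc : b ≠ c)
    (ha : a ≠ 0) (hb : b ≠ 0) (hc : c ≠ 0) (hsum : a⁻¹ + b⁻¹ + c⁻¹ ≠ 0) :
    (Matrix.of ![cuspidalPoint a, cuspidalPoint b, cuspidalPoint c]).det ≠ 0 := by
  have hsymm : a * b + b * c + c * a = a * b * c * (a⁻¹ + b⁻¹ + c⁻¹) := by
    field_simp
    ring
  rw [det_cuspidalPoint, hsymm]
  simp [sub_ne_zero, *, hac.symm]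

variable {ι : Type*} {t : ι → K}

theorem eq_zero_of_forall_eval_cuspidalPoint_eq_zero {s : Finset ι} (ht : Set.InjOn t s)
    (ht0 : ∀ i ∈ s, t i ≠ 0) {d : ℕ} (hd : d ≤ 2) (hs : s.card = d * 3)
    (hsum : ∑ i ∈ s, (t i)⁻¹ ≠ 0) {F : MvPolynomial (Fin 3) K} (hF : F.IsHomogeneous d)
    (hvan : ∀ i ∈ s, eval (cuspidalPoint (t i)) F = 0) : F = 0 := by
  have hres : restrictCuspidal F = 0 := by
    refine eq_zero_of_coeff_one_eq_zero_of_sum_inv_ne_zero (s := s.val.map t)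
      (fun hne ↦ map_val_le_roots ht hne fun i hi ↦ ?_) ?_ (coeff_one_restrictCuspidal F) ?_ ?_
    · rw [Polynomial.IsRoot, eval_restrictCuspidal, hvan i hi]
    · simpa [hs] using natDegree_restrictCuspidal_le hF
    · simpa using ht0
    · rwa [Multiset.map_map]
  refine eq_zero_of_restrictCuspidal_eq_zero (hd.trans (by decide)) hF (hF.coeff_eq_zero ?_) hres
  rw [Finsupp.degree_single]
  lia

theorem exists_eval_pderiv_cuspidalPoint_ne_zero [Fintype ι] (hι : Fintype.card ι = 8)
    (ht : Function.Injective t) (ht0 : ∀ i, t i ≠ 0) {i : ι}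
    (hsum : (t i)⁻¹ + ∑ j, (t j)⁻¹ ≠ 0) {F : MvPolynomial (Fin 3) K} (hne : F ≠ 0)
    (hF : F.IsHomogeneous 3) (hvan : ∀ j, eval (cuspidalPoint (t j)) F = 0) :
    ∃ m : Fin 3, eval (cuspidalPoint (t i)) (pderiv m F) ≠ 0 := by
  by_contra! hsing
  have hroot (j : ι) : (restrictCuspidal F).IsRoot (t j) := by
    rw [Polynomial.IsRoot, eval_restrictCuspidal, hvan j]
  have hres : restrictCuspidal F = 0 := by
    refine eq_zero_of_coeff_one_eq_zero_of_sum_inv_ne_zero (s := t i ::ₘ Finset.univ.val.map t)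
      (fun hne ↦ ?_) ?_ (coeff_one_restrictCuspidal F) ?_ ?_
    · exact cons_le_roots_of_isRoot_derivative hne (Finset.univ.nodup.map ht)
        (map_val_le_roots ht.injOn hne fun j _ ↦ hroot j) (hroot i)
        (isRoot_derivative_restrictCuspidal hsing)
    · simpa [hι] using natDegree_restrictCuspidal_le hF
    · simp [ht0, (ht0 i).symm]
    · rwa [Multiset.map_cons, Multiset.sum_cons, Multiset.map_map]
  have hmul := eq_C_mul_cuspidalCubic_of_restrictCuspidal_eq_zero hF hres
  obtain ⟨m, hm⟩ := exists_eval_pderiv_cuspidalCubic_ne_zero (ht0 i)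
  have hcoeff : coeff (Finsupp.single 0 3) F = 0 := by
    have h := hsing m
    rw [hmul] at h
    simpa [hm] using h
  exact hne (by rw [hmul, hcoeff, C_0, zero_mul])

theorem inGeneralPosition_cuspidalPoint {t : Fin 8 → K} (ht : Function.Injective t)
    (ht0 : ∀ i, t i ≠ 0) (hsum3 : ∀ s : Finset (Fin 8), s.card = 3 → ∑ i ∈ s, (t i)⁻¹ ≠ 0)
    (hsum6 : ∀ s : Finset (Fin 8), s.card = 6 → ∑ i ∈ s, (t i)⁻¹ ≠ 0)
    (hsum9 : ∀ i, (t i)⁻¹ + ∑ j, (t j)⁻¹ ≠ 0) :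
    InGeneralPosition fun i ↦ cuspidalPoint (t i) := by
  refine ⟨fun i j k hij hik hjk ↦ ?_, fun F hne hF ⟨s, hs, hvan⟩ ↦ ?_, fun F hne hF hvan i ↦ ?_⟩
  · have hsum : (t i)⁻¹ + (t j)⁻¹ + (t k)⁻¹ ≠ 0 := by
      simpa [hij, hik, hjk, add_assoc] using
        hsum3 {i, j, k} (Finset.card_eq_three.mpr ⟨i, j, k, hij, hik, hjk, rfl⟩)
    exact det_cuspidalPoint_ne_zero (ht.ne hij) (ht.ne hik) (ht.ne hjk) (ht0 i) (ht0 j) (ht0 k) hsum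
  · exact hne (eq_zero_of_forall_eval_cuspidalPoint_eq_zero ht.injOn (fun i _ ↦ ht0 i) le_rfl hs
      (hsum6 s hs) hF hvan)
  · exact exists_eval_pderiv_cuspidalPoint_ne_zero rfl ht ht0 (hsum9 i) hne hF hvan

end PointsOnCuspidalCubic

/-- The parameters of the eight points on the translate `t ↦ (t² - 1 : t³ - 1 : 1)` of the cuspidal
cubic. -/
def exampleParameters : Fin 8 → ℚ := ![-1, -2, 2, 3, 4, 5, 7, 1]

/-- The change of coordinates `(x : y : z) ↦ (x - z : y - z : z)`, taking the point with parameter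
`1` on the cuspidal cubic to the origin `(0 : 0 : 1)`. -/
def exampleTranslation : Matrix (Fin 3) (Fin 3) ℚ := !![1, 0, -1; 0, 1, -1; 0, 0, 1]

theorem isUnit_exampleTranslation : IsUnit exampleTranslation := by
  simp [exampleTranslation, Matrix.isUnit_iff_isUnit_det, Matrix.det_fin_three]

theorem examplePoints_eq_mulVec_cuspidalPoint :
    examplePoints = fun i ↦ exampleTranslation.mulVec (cuspidalPoint (exampleParameters i)) := by
  decide +kernel

theorem inGeneralPosition_cuspidalPoint_exampleParameters :
    InGeneralPosition fun i ↦ cuspidalPoint (exampleParameters i) :=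
  inGeneralPosition_cuspidalPoint (ht := by decide +kernel) (ht0 := by decide +kernel)
    (hsum3 := by decide +kernel) (hsum6 := by decide +kernel) (hsum9 := by decide +kernel)

/-- The eight points of Example 2.6 are in general position: no three are
collinear, no six lie on a conic, and every cubic through all eight points is
nonsingular at each of them. -/
theorem examplePoints_in_general_position :
    (∀ i j k : Fin 8, i ≠ j → i ≠ k → j ≠ k →
      (Matrix.of ![examplePoints i, examplePoints j, examplePoints k]).det ≠ 0) ∧
    (∀ F : MvPolynomial (Fin 3) ℚ, F ≠ 0 → F.IsHomogeneous 2 →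
      ¬∃ s : Finset (Fin 8), s.card = 6 ∧ ∀ i ∈ s, eval (examplePoints i) F = 0) ∧
    (∀ F : MvPolynomial (Fin 3) ℚ, F ≠ 0 → F.IsHomogeneous 3 →
      (∀ i : Fin 8, eval (examplePoints i) F = 0) →
      ∀ i : Fin 8, ∃ m : Fin 3, eval (examplePoints i) (pderiv m F) ≠ 0) := by
  have h := inGeneralPosition_cuspidalPoint_exampleParameters.mulVec isUnit_exampleTranslation
  rwa [← examplePoints_eq_mulVec_cuspidalPoint] at h
end
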